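/- arXiv:2511.03606 — 3 statements merged into one kernel-verified Lean document; each statement's English description precedes it below -/
import Mathlib

section
/- Let λ > 0 be fixed and suppose that for every t ≥ 1 the conditional expectation E[exp(λ|ε_t|) | F_{t-1}] is finite almost surely. Define e_t(λ) = ‖G_t‖² · E[exp(λ|ε_t|) − λ|ε_t| − 1 | F_{t-1}]. Then the real-valued process S_t = cosh(λ‖(ρI + V_t)^{-1/2} M_t‖) · exp(−Σ_{i=1}^t e_i(λ)) (with S_0 = 1) is a nonnegative supermartingale with respect to the filtration (F_t). -/
open MeasureTheory Filter Real
open scoped RealInnerProductSpace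

noncomputable def outerProd {H : Type*} [NormedAddCommGroup H] [InnerProductSpace ℝ H]
    (x : H) : H →L[ℝ] H :=
  (innerSL ℝ x).smulRight x

lemma cosh_convex_aux (z p q α β : ℝ) (hα : 0 ≤ α) (hβ : 0 ≤ β) (hab : α + β = 1)
    (h : z ^ 2 = α * p ^ 2 + β * q ^ 2) :
    Real.cosh z ≤ α * Real.cosh p + β * Real.cosh q := by
  refine hasSum_le (fun n => ?_) (Real.hasSum_cosh z)
    (((Real.hasSum_cosh p).mul_left α).add ((Real.hasSum_cosh q).mul_left β))
  have h1 := (convexOn_pow (𝕜 := ℝ) n).2 (Set.mem_Ici.2 (sq_nonneg p))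
    (Set.mem_Ici.2 (sq_nonneg q)) hα hβ hab
  simp only [smul_eq_mul, ← h, ← pow_mul] at h1
  rw [← mul_div_assoc, ← mul_div_assoc, ← add_div]
  gcongr

lemma exp_scale_aux (c z : ℝ) (hc : 0 ≤ c) (hc1 : c ≤ 1) (hz : 0 ≤ z) :
    Real.exp (c * z) - c * z - 1 ≤ c ^ 2 * (Real.exp z - z - 1) := by
  have key : ∀ x : ℝ, HasSum (fun n : ℕ => x ^ (n + 2) / (Nat.factorial (n + 2) : ℝ))
      (Real.exp x - x - 1) := by
    intro x
    have h := NormedSpace.expSeries_div_hasSum_exp x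
    rw [← Real.exp_eq_exp_ℝ] at h
    have h2 := (hasSum_nat_add_iff' 2).2 h
    simp [Finset.sum_range_succ] at h2
    have e3 : Real.exp x - x - 1 = Real.exp x - (1 + x) := by ring
    rw [e3]
    exact h2
  refine hasSum_le (fun n => ?_) (key (c * z)) ((key z).mul_left (c ^ 2))
  rw [← mul_div_assoc, mul_pow]
  have h3 : c ^ (n + 2) ≤ c ^ 2 := pow_le_pow_of_le_one hc hc1 (Nat.le_add_left 2 n)
  gcongr

lemma pinelis_aux {H : Type*} [NormedAddCommGroup H] [InnerProductSpace ℝ H] (u d : H) :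
    Real.cosh ‖u + d‖ ≤ Real.cosh ‖u‖ * (Real.exp ‖d‖ - ‖d‖)
      + Real.sinh ‖u‖ / ‖u‖ * inner ℝ u d := by
  set a := ‖u‖ with ha
  set r := ‖d‖ with hr
  have ha0 : 0 ≤ a := norm_nonneg _
  have hr0 : 0 ≤ r := norm_nonneg _
  obtain ⟨θ, hθ, hθ1⟩ : ∃ θ : ℝ, inner ℝ u d = θ * (a * r) ∧ |θ| ≤ 1 := by
    refine ⟨inner ℝ u d / (a * r), ?_, abs_real_inner_div_norm_mul_norm_le_one u d⟩
    by_cases h : a * r = 0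
    · have := abs_real_inner_le_norm u d
      rw [← ha, ← hr, h] at this
      rw [h, abs_nonpos_iff.1 this]; simp
    · rw [div_mul_cancel₀ _ h]
  obtain ⟨h1, h2⟩ := abs_le.1 hθ1
  have hz : ‖u + d‖ ^ 2 = (1 + θ) / 2 * (a + r) ^ 2 + (1 - θ) / 2 * (a - r) ^ 2 := by
    rw [norm_add_sq_real, hθ]; ring
  have h3 := cosh_convex_aux ‖u + d‖ (a + r) (a - r) ((1 + θ) / 2) ((1 - θ) / 2)
    (by linarith) (by linarith) (by ring) hz
  rw [Real.cosh_add, Real.cosh_sub] at h3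
  have h4 : Real.sinh a / a * inner ℝ u d = Real.sinh a * θ * r := by
    rw [hθ]
    by_cases h : a = 0
    · simp [h]
    · field_simp
  rw [h4, ← Real.cosh_add_sinh r]
  have h5 : 0 ≤ Real.sinh r - r := sub_nonneg.2 (Real.self_le_sinh_iff.2 hr0)
  have h6 : 0 ≤ Real.sinh a := Real.sinh_nonneg_iff.2 ha0
  have h7 : Real.sinh a < Real.cosh a := Real.sinh_lt_cosh a
  have h8 : θ * Real.sinh a ≤ Real.cosh a := by nlinarith
  nlinarith [mul_le_mul_of_nonneg_right h8 h5]

lemma pinelis_step {H : Type*} [NormedAddCommGroup H] [InnerProductSpace ℝ H] (u g : H)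
    (hg : ‖g‖ ≤ 1) (l : ℝ) (hl : 0 < l) (x : ℝ) :
    Real.cosh (l * ‖u + x • g‖) ≤
      Real.cosh (l * ‖u‖) * (1 + ‖g‖ ^ 2 * (Real.exp (l * |x|) - l * |x| - 1))
      + x * (Real.sinh (l * ‖u‖) / (l * ‖u‖) * (l ^ 2 * inner ℝ u g)) := by
  have h := pinelis_aux (l • u) ((l * x) • g)
  have e1 : l • u + (l * x) • g = l • (u + x • g) := by rw [smul_add, smul_smul]
  rw [e1, norm_smul, norm_smul, norm_smul, inner_smul_left, inner_smul_right, norm_mul,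
    Real.norm_of_nonneg hl.le, Real.norm_eq_abs] at h
  have h2 := exp_scale_aux ‖g‖ (l * |x|) (norm_nonneg _) hg (by positivity)
  have h3 : 0 < Real.cosh (l * ‖u‖) := Real.cosh_pos _
  have e2 : ‖g‖ * (l * |x|) = l * |x| * ‖g‖ := by ring
  rw [e2] at h2
  have h4 : Real.cosh (l * ‖u‖) * (Real.exp (l * |x| * ‖g‖) - l * |x| * ‖g‖) ≤
    Real.cosh (l * ‖u‖) * (1 + ‖g‖ ^ 2 * (Real.exp (l * |x|) - l * |x| - 1)) := by
    gcongr; linarith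
  simp only [conj_trivial] at h
  refine h.trans ((add_le_add_left h4 _).trans (le_of_eq ?_))
  ring

section ops
variable {H : Type*} [NormedAddCommGroup H] [InnerProductSpace ℝ H]

lemma inv_symm_aux (Q R : H →L[ℝ] H) (hs : ∀ a b : H, inner ℝ (Q a) b = inner ℝ a (Q b))
    (h : Q ∘L R = 1) (a b : H) : inner ℝ (R a) b = (inner ℝ a (R b) : ℝ) := by
  have h' : ∀ y, Q (R y) = y := fun y => by
    have := congrArg (fun T : H →L[ℝ] H => T y) h
    simpa using this
  calc inner ℝ (R a) b = (inner ℝ (R a) (Q (R b)) : ℝ) := by rw [h']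
    _ = inner ℝ (Q (R a)) (R b) := (hs _ _).symm
    _ = _ := by rw [h']

lemma inv_mono_aux (P Pi R Ri : H →L[ℝ] H)
    (hP : ∀ a b : H, inner ℝ (P a) b = inner ℝ a (P b))
    (hR : ∀ a b : H, inner ℝ (R a) b = inner ℝ a (R b))
    (hPi : P ∘L Pi = 1) (hRi : R ∘L Ri = 1) (hle : ∀ y, ‖P y‖ ≤ ‖R y‖) (m : H) :
    ‖Ri m‖ ≤ ‖Pi m‖ := by
  have hP' : ∀ y, P (Pi y) = y := fun y => by
    have := congrArg (fun T : H →L[ℝ] H => T y) hPi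
    simpa using this
  have hR' : ∀ y, R (Ri y) = y := fun y => by
    have := congrArg (fun T : H →L[ℝ] H => T y) hRi
    simpa using this
  have h1 : ‖Ri m‖ * ‖Ri m‖ ≤ ‖Pi m‖ * ‖Ri m‖ := by
    calc ‖Ri m‖ * ‖Ri m‖ = inner ℝ (Ri m) (Ri m) := (real_inner_self_eq_norm_mul_norm _).symm
      _ = inner ℝ (P (Pi m)) (Ri (Ri m)) := by rw [inv_symm_aux R Ri hR hRi, hP']
      _ = inner ℝ (Pi m) (P (Ri (Ri m))) := hP _ _
      _ ≤ ‖Pi m‖ * ‖P (Ri (Ri m))‖ := real_inner_le_norm _ _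
      _ ≤ ‖Pi m‖ * ‖R (Ri (Ri m))‖ := by gcongr; exact hle _
      _ = _ := by rw [hR']
  by_contra! hlt
  have : 0 < ‖Ri m‖ := (norm_nonneg _).trans_lt hlt
  nlinarith

lemma inv_le_one_aux (R Ri : H →L[ℝ] H)
    (hR : ∀ a b : H, inner ℝ (R a) b = inner ℝ a (R b))
    (hRi : R ∘L Ri = 1) (x : H) (hle : ∀ y, (inner ℝ x y : ℝ) ^ 2 ≤ ‖R y‖ ^ 2) :
    ‖Ri x‖ ≤ 1 := by
  have hR' : ∀ y, R (Ri y) = y := fun y => by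
    have := congrArg (fun T : H →L[ℝ] H => T y) hRi
    simpa using this
  have h := hle (Ri (Ri x))
  rw [← inv_symm_aux R Ri hR hRi, hR', real_inner_self_eq_norm_sq] at h
  by_contra! hlt
  have h1 : 1 < ‖Ri x‖ ^ 2 := by nlinarith
  nlinarith

lemma outerProd_apply' (x y : H) : outerProd x y = (inner ℝ x y : ℝ) • x := by
  simp [outerProd]

lemma outerProd_cont : Continuous (fun x : H => outerProd x) := by
  unfold outerProd
  fun_prop

lemma gram_cont [CompleteSpace H] (ρ : ℝ) (hρ : 0 < ρ) (t : ℕ) :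
    Continuous (fun x : ℕ → H => Ring.inverse
      (ρ • (1 : H →L[ℝ] H) + ∑ i ∈ Finset.Icc 1 t, outerProd (x i))) := by
  rw [continuous_iff_continuousAt]
  intro x
  have hu : IsUnit (ρ • (1 : H →L[ℝ] H) + ∑ i ∈ Finset.Icc 1 t, outerProd (x i)) := by
    refine ContinuousLinearMap.isUnit_of_forall_le_norm_inner_map _ (c := ⟨ρ, hρ.le⟩) hρ ?_
    intro y
    refine le_trans ?_ (Real.le_norm_self _)
    simp only [_root_.add_apply, _root_.smul_apply,
      one_apply_eq_self, inner_add_left, inner_smul_left,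
      _root_.sum_apply, sum_inner, outerProd_apply', real_inner_self_eq_norm_sq]
    have : 0 ≤ ∑ i ∈ Finset.Icc 1 t, (starRingEnd ℝ) (inner ℝ (x i) y) * inner ℝ (x i) y :=
      Finset.sum_nonneg fun i _ => by simpa using mul_self_nonneg _
    simp only [conj_trivial] at this ⊢
    change ‖y‖ ^ 2 * ρ ≤ _
    linarith
  have hc := NormedRing.inverse_continuousAt hu.unit
  rw [IsUnit.unit_spec] at hc
  have hf : Continuous (fun x : ℕ → H =>
      ρ • (1 : H →L[ℝ] H) + ∑ i ∈ Finset.Icc 1 t, outerProd (x i)) := by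
    refine continuous_const.add (continuous_finsetSum _ fun i _ => ?_)
    exact outerProd_cont.comp (continuous_apply i)
  exact ContinuousAt.comp (f := fun x : ℕ → H =>
      ρ • (1 : H →L[ℝ] H) + ∑ i ∈ Finset.Icc 1 t, outerProd (x i)) hc hf.continuousAt

lemma inv_eq_aux [CompleteSpace H] (Q R A : H →L[ℝ] H) (hA : Q ∘L Q = A)
    (h1 : R ∘L Q = 1) (h2 : Q ∘L R = 1) : Ring.inverse A = R ∘L R := by
  have e1 : R * Q = 1 := h1
  have e2 : Q * R = 1 := h2
  have e3 : Q * Q = A := hA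
  let U : (H →L[ℝ] H)ˣ := ⟨A, R * R, by
      rw [← e3, mul_assoc, ← mul_assoc Q R R, e2, one_mul, e2], by
      rw [← e3, mul_assoc, ← mul_assoc R Q Q, e1, one_mul, e1]⟩
  exact Ring.inverse_unit U

/-- measurability of the quadratic forms -/
lemma form_meas [CompleteSpace H] [SecondCountableTopology H] {Ω : Type*} (m : MeasurableSpace Ω)
    (X : ℕ → Ω → H) (t : ℕ) (hX : ∀ i ∈ Finset.Icc 1 t, StronglyMeasurable[m] (X i))
    (ρ : ℝ) (hρ : 0 < ρ) (Q R : Ω → H →L[ℝ] H)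
    (hQ : ∀ ω, ∀ a b : H, inner ℝ (Q ω a) b = inner ℝ a (Q ω b))
    (hQsq : ∀ ω, Q ω ∘L Q ω =
      ρ • (1 : H →L[ℝ] H) + ∑ i ∈ Finset.Icc 1 t, outerProd (X i ω))
    (hQinv : ∀ ω, R ω ∘L Q ω = 1 ∧ Q ω ∘L R ω = 1)
    (a b : Ω → H) (ha : StronglyMeasurable[m] a) (hb : StronglyMeasurable[m] b) :
    StronglyMeasurable[m] (fun ω => (inner ℝ (R ω (a ω)) (R ω (b ω)) : ℝ)) := by
  let _ : MeasurableSpace H := borel H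
  have _ : BorelSpace H := ⟨rfl⟩
  let Y : Ω → ℕ → H := fun ω i => if i ∈ Finset.Icc 1 t then X i ω else 0
  have hY : Measurable[m] Y := by
    refine measurable_pi_lambda _ fun i => ?_
    by_cases h : i ∈ Finset.Icc 1 t
    · simp only [Y, if_pos h]; exact (hX i h).measurable
    · simp only [Y, if_neg h]; exact measurable_const
  have hYs : StronglyMeasurable[m] Y := hY.stronglyMeasurable
  have hI := (gram_cont (H := H) ρ hρ t).comp_stronglyMeasurable hYs
  have hfin : StronglyMeasurable[m] (fun ω => (inner ℝ (a ω) ((Ring.inverse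
      (ρ • (1 : H →L[ℝ] H) + ∑ i ∈ Finset.Icc 1 t, outerProd (Y ω i))) (b ω)) : ℝ)) := by
    have hc : Continuous (fun p : (H × (H →L[ℝ] H)) × H => (inner ℝ p.1.1 (p.1.2 p.2) : ℝ)) := by
      fun_prop
    exact hc.comp_stronglyMeasurable ((ha.prodMk hI).prodMk hb)
  convert hfin using 2 with ω
  have e : ∑ i ∈ Finset.Icc 1 t, outerProd (Y ω i) = ∑ i ∈ Finset.Icc 1 t, outerProd (X i ω) :=
    Finset.sum_congr rfl fun i hi => by simp only [Y, if_pos hi]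
  rw [e, inv_eq_aux _ _ _ (hQsq ω) (hQinv ω).1 (hQinv ω).2,
    inv_symm_aux _ _ (hQ ω) (hQinv ω).2]
  rfl
end ops

/-- The abstract conditional step. -/
lemma condExp_step {Ω : Type*} {m m0 : MeasurableSpace Ω} {μ : Measure Ω} [IsProbabilityMeasure μ]
    (hm : m ≤ m0) (S D C B x ψ : Ω → ℝ) (hS : Integrable S μ)
    (hD : StronglyMeasurable[m] D) (hC : StronglyMeasurable[m] C) (hB : StronglyMeasurable[m] B)
    (hx : Integrable x μ) (hψ : Integrable ψ μ) (hx0 : μ[x | m] =ᵐ[μ] 0)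
    (hle : ∀ ω, S ω ≤ D ω + B ω * ψ ω + C ω * x ω) :
    ∀ᵐ ω ∂μ, (μ[S | m]) ω ≤ D ω + B ω * (μ[ψ | m]) ω := by
  let k : Ω → ℝ := fun ω => (1 + |D ω| + |C ω| + |B ω|)⁻¹
  have hden : ∀ ω, 0 < 1 + |D ω| + |C ω| + |B ω| := fun ω => by positivity
  have hkpos : ∀ ω, 0 < k ω := fun ω => inv_pos.2 (hden ω)
  have habs : ∀ f : Ω → ℝ, StronglyMeasurable[m] f → StronglyMeasurable[m] (fun ω => |f ω|) :=
    fun f hf => continuous_abs.comp_stronglyMeasurable hf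
  have hk : StronglyMeasurable[m] k := by
    have h1 : StronglyMeasurable[m] (fun ω => 1 + |D ω| + |C ω| + |B ω|) :=
      ((stronglyMeasurable_const.add (habs D hD)).add (habs C hC)).add (habs B hB)
    exact h1.measurable.inv.stronglyMeasurable
  have hbd : ∀ f : Ω → ℝ, (∀ ω, |f ω| ≤ 1 + |D ω| + |C ω| + |B ω|) →
      ∀ ω, ‖k ω * f ω‖ ≤ 1 := by
    intro f hf ω
    rw [norm_mul, Real.norm_of_nonneg (hkpos ω).le, Real.norm_eq_abs]
    calc k ω * |f ω| ≤ k ω * (1 + |D ω| + |C ω| + |B ω|) :=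
          mul_le_mul_of_nonneg_left (hf ω) (hkpos ω).le
      _ = 1 := inv_mul_cancel₀ (hden ω).ne'
  have b1 : ∀ ω, ‖k ω * D ω‖ ≤ 1 := hbd D fun ω => by
    linarith [abs_nonneg (C ω), abs_nonneg (B ω)]
  have b2 : ∀ ω, ‖k ω * C ω‖ ≤ 1 := hbd C fun ω => by
    linarith [abs_nonneg (D ω), abs_nonneg (B ω)]
  have b3 : ∀ ω, ‖k ω * B ω‖ ≤ 1 := hbd B fun ω => by
    linarith [abs_nonneg (D ω), abs_nonneg (C ω)]
  have b0 : ∀ ω, ‖k ω‖ ≤ 1 := fun ω => by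
    have := hbd (fun _ => 1) (fun ω => by
      simp only [abs_one]; linarith [abs_nonneg (D ω), abs_nonneg (C ω), abs_nonneg (B ω)]) ω
    simpa using this
  have mD : StronglyMeasurable[m] (fun ω => k ω * D ω) := hk.mul hD
  have mC : StronglyMeasurable[m] (fun ω => k ω * C ω) := hk.mul hC
  have mB : StronglyMeasurable[m] (fun ω => k ω * B ω) := hk.mul hB
  have iS : Integrable (fun ω => k ω * S ω) μ :=
    hS.bdd_mul (hk.mono hm).aestronglyMeasurable (ae_of_all _ b0)
  have iD : Integrable (fun ω => k ω * D ω) μ :=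
    Integrable.of_bound (mD.mono hm).aestronglyMeasurable 1 (ae_of_all _ b1)
  have iB : Integrable (fun ω => (k ω * B ω) * ψ ω) μ :=
    hψ.bdd_mul (mB.mono hm).aestronglyMeasurable (ae_of_all _ b3)
  have iC : Integrable (fun ω => (k ω * C ω) * x ω) μ :=
    hx.bdd_mul (mC.mono hm).aestronglyMeasurable (ae_of_all _ b2)
  have cS := condExp_mul_of_aestronglyMeasurable_left (m := m) hk.aestronglyMeasurable iS hS
  have cB := condExp_mul_of_aestronglyMeasurable_left (m := m) mB.aestronglyMeasurable iB hψ
  have cC := condExp_mul_of_aestronglyMeasurable_left (m := m) mC.aestronglyMeasurable iC hx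
  have cD : μ[(fun ω => k ω * D ω) | m] = fun ω => k ω * D ω :=
    condExp_of_stronglyMeasurable hm mD iD
  have hmono := condExp_mono (m := m) (μ := μ) (f := k * S)
    (g := ((fun ω => k ω * D ω) + (fun ω => k ω * B ω) * ψ) + (fun ω => k ω * C ω) * x) iS
    ((iD.add iB).add iC) (ae_of_all _ fun ω => by
      simp only [Pi.add_apply, Pi.mul_apply]
      have := mul_le_mul_of_nonneg_left (hle ω) (hkpos ω).le
      linarith)
  have a1 := condExp_add (m := m) (iD.add iB) iC
  have a2 := condExp_add (m := m) iD iB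
  filter_upwards [cS, cB, cC, hmono, a1, a2, hx0] with ω cS cB cC hmono a1 a2 hx0
  have a1' : (μ[((fun ω => k ω * D ω) + (fun ω => k ω * B ω) * ψ) + (fun ω => k ω * C ω) * x | m]) ω
    = (μ[(fun ω => k ω * D ω) + (fun ω => k ω * B ω) * ψ | m]) ω
      + (μ[(fun ω => k ω * C ω) * x | m]) ω := a1
  have a2' : (μ[(fun ω => k ω * D ω) + (fun ω => k ω * B ω) * ψ | m]) ω
    = (μ[(fun ω => k ω * D ω) | m]) ω + (μ[(fun ω => k ω * B ω) * ψ | m]) ω := a2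
  rw [a1', a2', cS, cB, cC, cD] at hmono
  simp only [Pi.mul_apply, hx0, Pi.zero_apply, mul_zero, add_zero] at hmono
  refine le_of_mul_le_mul_left ?_ (hkpos ω)
  linarith

theorem stmt_0
    {H : Type*} [NormedAddCommGroup H] [InnerProductSpace ℝ H] [CompleteSpace H]
    [SecondCountableTopology H]
    {Ω : Type*} {m0 : MeasurableSpace Ω} {μ : Measure Ω} [IsProbabilityMeasure μ]
    (ℱ : Filtration ℕ m0)
    (X : ℕ → Ω → H) (ε : ℕ → Ω → ℝ)
    (hX : ∀ t, 1 ≤ t → StronglyMeasurable[ℱ (t - 1)] (X t))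
    (hεmeas : ∀ t, 1 ≤ t → StronglyMeasurable[ℱ t] (ε t))
    (hεint : ∀ t, 1 ≤ t → Integrable (ε t) μ)
    (hε0 : ∀ t, 1 ≤ t → μ[ε t | ℱ (t - 1)] =ᵐ[μ] 0)
    (ρ : ℝ) (hρ : 0 < ρ)
    (Q Qinv : ℕ → Ω → H →L[ℝ] H)
    (hQpos : ∀ t ω, (Q t ω).IsPositive)
    (hQsq : ∀ t ω, Q t ω ∘L Q t ω =
      ρ • (1 : H →L[ℝ] H) + ∑ i ∈ Finset.Icc 1 t, outerProd (X i ω))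
    (hQinv : ∀ t ω, Qinv t ω ∘L Q t ω = 1 ∧ Q t ω ∘L Qinv t ω = 1)
    (l : ℝ) (hl : 0 < l)
    (hmgf : ∀ t, 1 ≤ t → Integrable (fun ω => Real.exp (l * |ε t ω|)) μ)
    (e : ℕ → Ω → ℝ)
    (he : ∀ t ω, e t ω = ‖Qinv t ω (X t ω)‖ ^ 2 *
      (μ[fun ω' => Real.exp (l * |ε t ω'|) - l * |ε t ω'| - 1 | ℱ (t - 1)]) ω)
    (S : ℕ → Ω → ℝ)
    (hS : ∀ t ω, S t ω =
      Real.cosh (l * ‖Qinv t ω (∑ i ∈ Finset.Icc 1 t, ε i ω • X i ω)‖) *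
        Real.exp (-(∑ i ∈ Finset.Icc 1 t, e i ω))) :
    (∀ t ω, 0 ≤ S t ω) ∧
      ∀ t, 1 ≤ t → μ[S t | ℱ (t - 1)] ≤ᵐ[μ] S (t - 1) := by
  classical
  have hS0 : ∀ t ω, 0 ≤ S t ω := fun t ω => by
    rw [hS]; exact mul_nonneg (Real.cosh_pos _).le (Real.exp_pos _).le
  refine ⟨hS0, ?_⟩
  intro t ht
  obtain ⟨n, rfl⟩ : ∃ n, t = n + 1 := ⟨t - 1, by omega⟩
  simp only [Nat.add_sub_cancel]
  by_cases hSi : Integrable (S (n + 1)) μ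
  swap
  · rw [condExp_of_not_integrable hSi]
    exact ae_of_all _ (hS0 n)
  have hsym : ∀ t ω, ∀ a b : H, inner ℝ (Q t ω a) b = (inner ℝ a (Q t ω b) : ℝ) := fun t ω a b =>
    (hQpos t ω).isSymmetric a b
  have hXm : ∀ i, 1 ≤ i → i ≤ n + 1 → StronglyMeasurable[ℱ n] (X i) := fun i h1 h2 =>
    (hX i h1).mono (ℱ.mono (by omega))
  have hform : ∀ t, t ≤ n + 1 → ∀ a b : Ω → H, StronglyMeasurable[ℱ n] a →
      StronglyMeasurable[ℱ n] b →
      StronglyMeasurable[ℱ n] (fun ω => (inner ℝ (Qinv t ω (a ω)) (Qinv t ω (b ω)) : ℝ)) :=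
    fun t ht a b ha hb => form_meas (ℱ n) X t
      (fun i hi => hXm i (Finset.mem_Icc.1 hi).1 ((Finset.mem_Icc.1 hi).2.trans ht)) ρ hρ (Q t)
      (Qinv t) (hsym t) (hQsq t) (hQinv t) a b ha hb
  have hnorm : ∀ t, t ≤ n + 1 → ∀ a : Ω → H, StronglyMeasurable[ℱ n] a →
      StronglyMeasurable[ℱ n] (fun ω => ‖Qinv t ω (a ω)‖) := by
    intro t ht a ha
    have h := Real.continuous_sqrt.comp_stronglyMeasurable (hform t ht a a ha ha)
    convert h using 2 with ω
    simp
  let M : Ω → H := fun ω => ∑ i ∈ Finset.Icc 1 n, ε i ω • X i ω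
  have hM : StronglyMeasurable[ℱ n] M := by
    refine Finset.stronglyMeasurable_fun_sum _ fun i hi => ?_
    obtain ⟨h1, h2⟩ := Finset.mem_Icc.1 hi
    exact ((hεmeas i h1).mono (ℱ.mono h2)).smul (hXm i h1 (by omega))
  let ψ : Ω → ℝ := fun ω' => Real.exp (l * |ε (n + 1) ω'|) - l * |ε (n + 1) ω'| - 1
  have hψ : Integrable ψ μ :=
    ((hmgf (n + 1) ht).sub ((hεint (n + 1) ht).abs.const_mul l)).sub (integrable_const 1)
  have hem : ∀ i, 1 ≤ i → i ≤ n + 1 → StronglyMeasurable[ℱ n] (e i) := by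
    intro i h1 h2
    have : e i = fun ω => ‖Qinv i ω (X i ω)‖ ^ 2 *
      (μ[fun ω' => Real.exp (l * |ε i ω'|) - l * |ε i ω'| - 1 | ℱ (i - 1)]) ω := funext (he i)
    rw [this]
    exact ((hnorm i h2 _ (hXm i h1 h2)).pow 2).mul
      (stronglyMeasurable_condExp.mono (ℱ.mono (by omega)))
  let W : Ω → ℝ := fun ω => Real.exp (-(∑ i ∈ Finset.Icc 1 (n + 1), e i ω))
  have hW : StronglyMeasurable[ℱ n] W := by
    refine Real.continuous_exp.comp_stronglyMeasurable (StronglyMeasurable.neg ?_)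
    refine Finset.stronglyMeasurable_fun_sum _ fun i hi => ?_
    obtain ⟨h1, h2⟩ := Finset.mem_Icc.1 hi
    exact hem i h1 h2
  have hu := hnorm (n + 1) le_rfl M hM
  have hg := hnorm (n + 1) le_rfl (X (n + 1)) (hXm _ ht le_rfl)
  have hug := hform (n + 1) le_rfl M (X (n + 1)) hM (hXm _ ht le_rfl)
  let u : Ω → H := fun ω => Qinv (n + 1) ω (M ω)
  let g : Ω → H := fun ω => Qinv (n + 1) ω (X (n + 1) ω)
  let D : Ω → ℝ := fun ω => W ω * Real.cosh (l * ‖u ω‖)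
  let B : Ω → ℝ := fun ω => D ω * ‖g ω‖ ^ 2
  let C : Ω → ℝ := fun ω => W ω *
    (Real.sinh (l * ‖u ω‖) / (l * ‖u ω‖) * (l ^ 2 * inner ℝ (u ω) (g ω)))
  have hlu : StronglyMeasurable[ℱ n] (fun ω => l * ‖u ω‖) := hu.const_mul l
  have hD : StronglyMeasurable[ℱ n] D :=
    hW.mul (Real.continuous_cosh.comp_stronglyMeasurable hlu)
  have hB : StronglyMeasurable[ℱ n] B := hD.mul (hg.pow 2)
  have hC : StronglyMeasurable[ℱ n] C := by
    have h1 : StronglyMeasurable[ℱ n] (fun ω => Real.sinh (l * ‖u ω‖)) :=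
      Real.continuous_sinh.comp_stronglyMeasurable hlu
    have h2 : StronglyMeasurable[ℱ n] (fun ω => Real.sinh (l * ‖u ω‖) / (l * ‖u ω‖)) :=
      (h1.measurable.div hlu.measurable).stronglyMeasurable
    exact hW.mul (h2.mul (hug.const_mul (l ^ 2)))
  have hsq : ∀ t ω y, ‖Q t ω y‖ ^ 2 = ρ * ‖y‖ ^ 2
      + ∑ i ∈ Finset.Icc 1 t, (inner ℝ (X i ω) y : ℝ) ^ 2 := by
    intro t ω y
    have h1 : ‖Q t ω y‖ ^ 2 = inner ℝ ((Q t ω ∘L Q t ω) y) y := by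
      rw [← real_inner_self_eq_norm_sq, ContinuousLinearMap.comp_apply, hsym,
        real_inner_comm]
    rw [h1, hQsq]
    simp only [_root_.add_apply, _root_.smul_apply,
      one_apply_eq_self, inner_add_left, inner_smul_left,
      _root_.sum_apply, sum_inner, outerProd_apply', real_inner_self_eq_norm_sq,
      conj_trivial, sq (inner ℝ (X _ ω) y)]
  have hsucc : ∀ ω y, ‖Q (n + 1) ω y‖ ^ 2 = ‖Q n ω y‖ ^ 2
      + (inner ℝ (X (n + 1) ω) y : ℝ) ^ 2 := by
    intro ω y
    rw [hsq, hsq, Finset.sum_Icc_succ_top (by omega)]; ring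
  have hg1 : ∀ ω, ‖g ω‖ ≤ 1 := fun ω =>
    inv_le_one_aux _ _ (hsym (n + 1) ω) (hQinv (n + 1) ω).2 _ fun y => by
      rw [hsucc]; nlinarith [sq_nonneg ‖Q n ω y‖]
  have huM : ∀ ω, ‖u ω‖ ≤ ‖Qinv n ω (M ω)‖ := fun ω =>
    inv_mono_aux _ _ _ _ (hsym n ω) (hsym (n + 1) ω) (hQinv n ω).2 (hQinv (n + 1) ω).2
      (fun y => by
        refine (sq_le_sq₀ (norm_nonneg _) (norm_nonneg _)).1 ?_
        rw [hsucc]; nlinarith [sq_nonneg (inner ℝ (X (n + 1) ω) y : ℝ)]) _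
  have hle : ∀ ω, S (n + 1) ω ≤ D ω + B ω * ψ ω + C ω * ε (n + 1) ω := by
    intro ω
    have h := pinelis_step (u ω) (g ω) (hg1 ω) l hl (ε (n + 1) ω)
    have e1 : Qinv (n + 1) ω (∑ i ∈ Finset.Icc 1 (n + 1), ε i ω • X i ω)
        = u ω + ε (n + 1) ω • g ω := by
      rw [Finset.sum_Icc_succ_top (by omega), map_add, map_smul]
    rw [hS, e1]
    have h2 := mul_le_mul_of_nonneg_right h (Real.exp_pos
      (-(∑ i ∈ Finset.Icc 1 (n + 1), e i ω))).le
    refine h2.trans (le_of_eq ?_)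
    simp only [B, D, C, W, ψ]
    ring
  have hfin := condExp_step (ℱ.le n) (S (n + 1)) D C B (ε (n + 1)) ψ hSi hD hC hB
    (hεint _ ht) hψ (hε0 (n + 1) ht) hle
  filter_upwards [hfin] with ω hω
  refine hω.trans ?_
  have e2 : D ω + B ω * (μ[ψ | ℱ n]) ω = D ω * (1 + e (n + 1) ω) := by
    have : e (n + 1) ω = ‖g ω‖ ^ 2 * (μ[ψ | ℱ n]) ω := he (n + 1) ω
    rw [this]; simp only [B]; ring
  have hD0 : 0 ≤ D ω := mul_nonneg (Real.exp_pos _).le (Real.cosh_pos _).le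
  have h3 : 1 + e (n + 1) ω ≤ Real.exp (e (n + 1) ω) := by
    linarith [Real.add_one_le_exp (e (n + 1) ω)]
  rw [e2, hS n ω]
  calc D ω * (1 + e (n + 1) ω) ≤ D ω * Real.exp (e (n + 1) ω) :=
        mul_le_mul_of_nonneg_left h3 hD0
    _ = Real.cosh (l * ‖u ω‖) * Real.exp (-(∑ i ∈ Finset.Icc 1 n, e i ω)) := by
        simp only [D, W]
        rw [mul_right_comm, ← Real.exp_add, Finset.sum_Icc_succ_top (by omega), mul_comm]
        congr 2; ring
    _ ≤ _ := by
        refine mul_le_mul_of_nonneg_right ?_ (Real.exp_pos _).le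
        rw [Real.cosh_le_cosh, abs_of_nonneg (by positivity), abs_of_nonneg (by positivity)]
        exact mul_le_mul_of_nonneg_left (huM ω) hl.le
end

section
/- Let λ > 0 be fixed, suppose E[exp(λ|ε_t|) | F_{t-1}] < ∞ almost surely for all t, and set e_t(λ) = ‖G_t‖² · E[exp(λ|ε_t|) − λ|ε_t| − 1 | F_{t-1}]. Then for any δ ∈ (0,1), with probability at least 1 − δ it holds simultaneously for all t ≥ 1 that ‖(ρI + V_t)^{-1/2} M_t‖ ≤ (Σ_{i=1}^t e_i(λ) + log(2/δ)) / λ. -/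
open MeasureTheory Filter Real
open scoped RealInnerProductSpace

lemma aux_cosh_conv {r p q θ : ℝ} (h0 : 0 ≤ θ) (h1 : θ ≤ 1)
    (h : r ^ 2 = θ * p ^ 2 + (1 - θ) * q ^ 2) :
    Real.cosh r ≤ θ * Real.cosh p + (1 - θ) * Real.cosh q := by
  refine hasSum_le (fun n => ?_) (Real.hasSum_cosh r)
    (((Real.hasSum_cosh p).mul_left θ).add ((Real.hasSum_cosh q).mul_left (1 - θ)))
  have := (convexOn_pow n).2 (x := p ^ 2) (Set.mem_Ici.2 (sq_nonneg p)) (y := q ^ 2)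
    (Set.mem_Ici.2 (sq_nonneg q)) h0 (sub_nonneg.2 h1) (by ring)
  simp only [smul_eq_mul] at this
  rw [pow_mul, pow_mul, pow_mul, h, ← mul_div_assoc, ← mul_div_assoc, ← add_div]
  gcongr

lemma aux_hasSum_phi (x : ℝ) :
    HasSum (fun n : ℕ => x ^ (n + 2) / ((n + 2).factorial : ℝ)) (Real.exp x - x - 1) := by
  have h : HasSum (fun n : ℕ => x ^ n / (n.factorial : ℝ)) (Real.exp x) := by
    rw [Real.exp_eq_exp_ℝ]
    exact NormedSpace.expSeries_div_hasSum_exp x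
  have := (hasSum_nat_add_iff' (f := fun n : ℕ => x ^ n / (n.factorial : ℝ)) 2).2 h
  simp [Finset.sum_range_succ] at this
  have h2 : Real.exp x - x - 1 = Real.exp x - (1 + x) := by ring
  rw [h2]
  exact this

lemma aux_phi_scale {s x : ℝ} (hs : 0 ≤ s) (hs1 : s ≤ 1) (hx : 0 ≤ x) :
    Real.exp (s * x) - s * x - 1 ≤ s ^ 2 * (Real.exp x - x - 1) := by
  refine hasSum_le (fun n => ?_) (aux_hasSum_phi (s * x)) ((aux_hasSum_phi x).mul_left (s ^ 2))
  rw [← mul_div_assoc, mul_pow]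
  have h1 : s ^ (n + 2) ≤ s ^ 2 := pow_le_pow_of_le_one hs hs1 (by omega)
  exact div_le_div_of_nonneg_right (mul_le_mul_of_nonneg_right h1 (by positivity)) (by positivity)

lemma aux_pinelis0 {H : Type*} [NormedAddCommGroup H] [InnerProductSpace ℝ H] (u v : H) :
    Real.cosh ‖u + v‖ ≤ Real.cosh ‖u‖ * (Real.exp ‖v‖ - ‖v‖)
      + Real.sinh ‖u‖ / ‖u‖ * ⟪u, v⟫ := by
  set a := ‖u‖ with ha
  set b := ‖v‖ with hb
  have ha0 : 0 ≤ a := norm_nonneg _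
  have hb0 : 0 ≤ b := norm_nonneg _
  obtain ⟨τ, hτ, hτc⟩ : ∃ τ : ℝ, |τ| ≤ 1 ∧ ⟪u, v⟫ = τ * (a * b) := by
    by_cases h : a * b = 0
    · refine ⟨0, by simp, ?_⟩
      rcases mul_eq_zero.1 h with h | h
      · rw [norm_eq_zero.1 h]; simp
      · rw [norm_eq_zero.1 h]; simp
    · refine ⟨⟪u, v⟫ / (a * b), abs_real_inner_div_norm_mul_norm_le_one u v, ?_⟩
      rw [div_mul_cancel₀ _ h]
  have hτ' := abs_le.1 hτ
  have h1 := aux_cosh_conv (r := ‖u + v‖) (p := a + b) (q := a - b) (θ := (1 + τ) / 2)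
    (by linarith) (by linarith) (by
      rw [norm_add_sq_real, hτc]; ring)
  rw [Real.cosh_add, Real.cosh_sub] at h1
  have h2 : Real.sinh a / a * (τ * (a * b)) = τ * b * Real.sinh a := by
    by_cases h : a = 0
    · simp [h]
    · field_simp
  rw [hτc, h2]
  have h3 : 0 ≤ Real.sinh a := Real.sinh_nonneg_iff.2 ha0
  have h4 : Real.sinh a ≤ Real.cosh a := (Real.sinh_lt_cosh a).le
  have h5 : 0 ≤ Real.sinh b - b := sub_nonneg.2 (Real.self_le_sinh_iff.2 hb0)
  have h6 : Real.exp b = Real.cosh b + Real.sinh b := (Real.cosh_add_sinh b).symm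
  have h7 : τ * Real.sinh a ≤ Real.cosh a := by nlinarith
  rw [h6]
  nlinarith [mul_le_mul_of_nonneg_right h7 h5]

lemma aux_pinelis {H : Type*} [NormedAddCommGroup H] [InnerProductSpace ℝ H] (u g : H)
    (hg : ‖g‖ ≤ 1) (l x : ℝ) (hl : 0 < l) :
    Real.cosh (l * ‖u + x • g‖) ≤
      Real.cosh (l * ‖u‖) + Real.cosh (l * ‖u‖) * ‖g‖ ^ 2 * (Real.exp (l * |x|) - l * |x| - 1)
      + Real.sinh (l * ‖u‖) / ‖u‖ * l * ⟪u, g⟫ * x := by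
  have h := aux_pinelis0 (l • u) (l • (x • g))
  rw [← smul_add, norm_smul, norm_smul, norm_smul, norm_smul, Real.norm_eq_abs, abs_of_pos hl,
    real_inner_smul_left, real_inner_smul_right, real_inner_smul_right, Real.norm_eq_abs] at h
  have h2 := aux_phi_scale (norm_nonneg g) hg (x := l * |x|) (by positivity)
  have h3 : ‖g‖ * (l * |x|) = l * (|x| * ‖g‖) := by ring
  rw [h3] at h2
  have h4 : Real.sinh (l * ‖u‖) / (l * ‖u‖) * (l * (l * (x * ⟪u, g⟫))) =
    Real.sinh (l * ‖u‖) / ‖u‖ * l * ⟪u, g⟫ * x := by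
    rw [← div_div]
    field_simp
  rw [h4] at h
  have := mul_le_mul_of_nonneg_left h2 (Real.cosh_pos (l * ‖u‖)).le
  nlinarith

lemma aux_drift {H : Type*} [NormedAddCommGroup H] [InnerProductSpace ℝ H] (u g : H)
    (l x : ℝ) (hl : 0 < l) :
    |Real.sinh (l * ‖u‖) / ‖u‖ * l * ⟪u, g⟫ * x| ≤
      Real.cosh (l * ‖u‖) + Real.cosh (l * ‖u‖) * ‖g‖ ^ 2 * (Real.exp (l * |x|) - l * |x| - 1) := by
  have h0 : 0 ≤ Real.sinh (l * ‖u‖) := Real.sinh_nonneg_iff.2 (by positivity)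
  have h1 : Real.sinh (l * ‖u‖) / ‖u‖ * |⟪u, g⟫| ≤ Real.cosh (l * ‖u‖) * ‖g‖ := by
    calc Real.sinh (l * ‖u‖) / ‖u‖ * |⟪u, g⟫|
        ≤ Real.sinh (l * ‖u‖) / ‖u‖ * (‖u‖ * ‖g‖) := by
          gcongr; exact abs_real_inner_le_norm u g
      _ ≤ Real.sinh (l * ‖u‖) * ‖g‖ := by
          by_cases h : ‖u‖ = 0
          · simp [h]
          · apply le_of_eq; field_simp
      _ ≤ _ := by gcongr; exact (Real.sinh_lt_cosh _).le
  have h2 := Real.quadratic_le_exp_of_nonneg (x := l * |x|) (by positivity)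
  rw [abs_mul, abs_mul, abs_mul, abs_div, abs_of_nonneg h0, abs_norm, abs_of_pos hl]
  calc _ = Real.sinh (l * ‖u‖) / ‖u‖ * |⟪u, g⟫| * (l * |x|) := by ring
    _ ≤ Real.cosh (l * ‖u‖) * ‖g‖ * (l * |x|) := by gcongr
    _ = Real.cosh (l * ‖u‖) * (‖g‖ * (l * |x|)) := by ring
    _ ≤ Real.cosh (l * ‖u‖) * (1 + ‖g‖ ^ 2 * (Real.exp (l * |x|) - l * |x| - 1)) := by
        refine mul_le_mul_of_nonneg_left ?_ (Real.cosh_pos _).le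
        have : ‖g‖ ^ 2 * ((l * |x|) ^ 2 / 2) ≤ ‖g‖ ^ 2 * (Real.exp (l * |x|) - l * |x| - 1) := by
          gcongr; linarith
        nlinarith [sq_nonneg (‖g‖ * (l * |x|) - 1)]
    _ = _ := by ring

lemma aux_lintegral_condExp {Ω : Type*} {m m0 : MeasurableSpace Ω} {μ : Measure Ω}
    [IsProbabilityMeasure μ] (hm : m ≤ m0) {φ : Ω → ℝ} (hφ : Integrable φ μ) (hφ0 : ∀ ω, 0 ≤ φ ω)
    {Z : Ω → ENNReal} (hZ : Measurable[m] Z) :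
    ∫⁻ ω, ENNReal.ofReal (φ ω) * Z ω ∂μ = ∫⁻ ω, ENNReal.ofReal ((μ[φ | m]) ω) * Z ω ∂μ := by
  have hc0 : 0 ≤ᵐ[μ] μ[φ | m] := condExp_nonneg (Eventually.of_forall hφ0)
  have h : (μ.withDensity (fun ω => ENNReal.ofReal (φ ω))).trim hm =
      (μ.withDensity (fun ω => ENNReal.ofReal ((μ[φ | m]) ω))).trim hm := by
    refine @Measure.ext _ m _ _ (fun s hs => ?_)
    rw [trim_measurableSet_eq hm hs, trim_measurableSet_eq hm hs, withDensity_apply _ (hm s hs),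
      withDensity_apply _ (hm s hs),
      ← ofReal_integral_eq_lintegral_ofReal hφ.integrableOn (Eventually.of_forall hφ0),
      ← ofReal_integral_eq_lintegral_ofReal integrable_condExp.integrableOn
        (ae_restrict_of_ae hc0), setIntegral_condExp hm hφ hs]
  have h2 := congrArg (fun ν => @lintegral Ω m ν Z) h
  rw [lintegral_trim hm hZ, lintegral_trim hm hZ,
    lintegral_withDensity_eq_lintegral_mul₀ hφ.aemeasurable.ennreal_ofReal
      (hZ.mono hm le_rfl).aemeasurable,
    lintegral_withDensity_eq_lintegral_mul₀ integrable_condExp.aemeasurable.ennreal_ofReal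
      (hZ.mono hm le_rfl).aemeasurable] at h2
  exact h2

lemma aux_step {Ω : Type*} {m m0 : MeasurableSpace Ω} {μ : Measure Ω}
    [IsProbabilityMeasure μ] (hm : m ≤ m0) {φ ε p q r s : Ω → ℝ}
    (hφ : Integrable φ μ) (hφ0 : ∀ ω, 0 ≤ φ ω)
    (hε : Integrable ε μ) (hε0 : μ[ε | m] =ᵐ[μ] 0)
    (hp : StronglyMeasurable[m] p) (hq : StronglyMeasurable[m] q) (hr : StronglyMeasurable[m] r)
    (hp0 : ∀ ω, 0 ≤ p ω) (hq0 : ∀ ω, 0 ≤ q ω)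
    (hrb : ∀ ω, |r ω * ε ω| ≤ p ω + q ω * φ ω)
    (hs : ∀ᵐ ω ∂μ, p ω + q ω * (μ[φ | m]) ω ≤ s ω) :
    ∫⁻ ω, ENNReal.ofReal (p ω + q ω * φ ω + r ω * ε ω) ∂μ ≤ ∫⁻ ω, ENNReal.ofReal (s ω) ∂μ := by
  by_cases hfin : ∫⁻ ω, ENNReal.ofReal (s ω) ∂μ = ⊤
  · rw [hfin]; exact le_top
  have hc0 : 0 ≤ᵐ[μ] μ[φ | m] := condExp_nonneg (Eventually.of_forall hφ0)
  have hpm := hp.mono hm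
  have hqm := hq.mono hm
  have key : ∫⁻ ω, ENNReal.ofReal (p ω + q ω * φ ω) ∂μ ≤ ∫⁻ ω, ENNReal.ofReal (s ω) ∂μ := by
    calc ∫⁻ ω, ENNReal.ofReal (p ω + q ω * φ ω) ∂μ
        = ∫⁻ ω, ENNReal.ofReal (p ω) + ENNReal.ofReal (φ ω) * ENNReal.ofReal (q ω) ∂μ := by
          refine lintegral_congr fun ω => ?_
          rw [ENNReal.ofReal_add (hp0 ω) (mul_nonneg (hq0 ω) (hφ0 ω)), mul_comm,
            ENNReal.ofReal_mul (hφ0 ω)]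
      _ = ∫⁻ ω, ENNReal.ofReal (p ω) + ENNReal.ofReal ((μ[φ | m]) ω) * ENNReal.ofReal (q ω) ∂μ := by
          rw [lintegral_add_left hpm.measurable.ennreal_ofReal,
            lintegral_add_left hpm.measurable.ennreal_ofReal,
            aux_lintegral_condExp hm hφ hφ0 hq.measurable.ennreal_ofReal]
      _ ≤ _ := by
          refine lintegral_mono_ae ?_
          filter_upwards [hc0, hs] with ω h1 h2
          rw [← ENNReal.ofReal_mul h1, ← ENNReal.ofReal_add (hp0 ω) (mul_nonneg h1 (hq0 ω))]
          apply ENNReal.ofReal_le_ofReal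
          linarith [mul_comm (q ω) ((μ[φ | m]) ω)]
  have hnn : ∀ ω, 0 ≤ p ω + q ω * φ ω := fun ω => add_nonneg (hp0 ω) (mul_nonneg (hq0 ω) (hφ0 ω))
  have hI : Integrable (fun ω => p ω + q ω * φ ω) μ := by
    refine ⟨hpm.aestronglyMeasurable.add (hqm.aestronglyMeasurable.mul hφ.1), ?_⟩
    rw [hasFiniteIntegral_iff_ofReal (Eventually.of_forall hnn)]
    exact lt_of_le_of_lt key (lt_top_iff_ne_top.2 hfin)
  have hJ : Integrable (r * ε) μ := by
    refine hI.mono' ((hr.mono hm).aestronglyMeasurable.mul hε.1) (Eventually.of_forall fun ω => ?_)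
    exact hrb ω
  have hJ0 : ∫ ω, r ω * ε ω ∂μ = 0 := by
    have h1 : ∫ ω, (μ[r * ε | m]) ω ∂μ = ∫ ω, (r * ε) ω ∂μ := integral_condExp hm
    have h2 : μ[r * ε | m] =ᵐ[μ] 0 := by
      filter_upwards [condExp_mul_of_stronglyMeasurable_left hr hJ hε, hε0] with ω h h'
      rw [h, Pi.mul_apply, h']; simp
    rw [integral_congr_ae h2] at h1
    simpa using h1.symm
  change ∫⁻ ω, ENNReal.ofReal (((fun ω => p ω + q ω * φ ω) + r * ε) ω) ∂μ ≤ _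
  rw [← ofReal_integral_eq_lintegral_ofReal (hI.add hJ)]
  · have h3 : ∫ ω, ((fun ω => p ω + q ω * φ ω) + r * ε) ω ∂μ = ∫ ω, p ω + q ω * φ ω ∂μ := by
      have := integral_add hI hJ
      simp only [Pi.mul_apply, hJ0, add_zero] at this
      exact this
    refine le_trans (le_of_eq (congrArg _ h3)) ?_
    rw [ofReal_integral_eq_lintegral_ofReal hI (Eventually.of_forall hnn)]
    exact key
  · refine Eventually.of_forall fun ω => ?_
    have := (abs_le.1 (hrb ω)).1
    simp only [Pi.zero_apply, Pi.add_apply, Pi.mul_apply]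
    linarith

lemma aux_ville {Ω : Type*} {m0 : MeasurableSpace Ω} {μ : Measure Ω} (ℱ : Filtration ℕ m0)
    (S : ℕ → Ω → ENNReal) (hS : ∀ n, Measurable[ℱ n] (S n))
    (hstep : ∀ n A, MeasurableSet[ℱ n] A → ∫⁻ ω in A, S (n + 1) ω ∂μ ≤ ∫⁻ ω in A, S n ω ∂μ)
    (c : ENNReal) :
    c * μ {ω | ∃ n, c ≤ S n ω} ≤ ∫⁻ ω, S 0 ω ∂μ := by
  set B : ℕ → Set Ω := fun n => {ω | ∃ k ≤ n, c ≤ S k ω} with hB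
  have hBm : ∀ n, MeasurableSet[ℱ n] (B n) := by
    intro n
    have : B n = ⋃ k ∈ Set.Iic n, {ω | c ≤ S k ω} := by
      ext ω; simp [hB]
    rw [this]
    refine MeasurableSet.biUnion (Set.to_countable _) fun k hk => ?_
    exact ℱ.mono hk _ (hS k measurableSet_Ici)
  have hmain : ∀ n, c * μ (B n) + ∫⁻ ω in (B n)ᶜ, S n ω ∂μ ≤ ∫⁻ ω, S 0 ω ∂μ := by
    intro n
    have hcheb : ∀ n (E : Set Ω), MeasurableSet E → (∀ ω ∈ E, c ≤ S n ω) →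
        c * μ E ≤ ∫⁻ ω in E, S n ω ∂μ := by
      intro n E hE h
      rw [← setLIntegral_const]
      exact setLIntegral_mono' hE h
    induction n with
    | zero =>
      rw [← lintegral_add_compl (μ := μ) (S 0) (ℱ.le 0 _ (hBm 0))]
      refine add_le_add ?_ le_rfl
      refine hcheb 0 _ (ℱ.le 0 _ (hBm 0)) ?_
      rintro ω ⟨k, hk, h⟩
      obtain rfl : k = 0 := by omega
      exact h
    | succ n ih =>
      refine le_trans ?_ ih
      have hm1 : MeasurableSet (B n) := ℱ.le n _ (hBm n)
      have hm2 : MeasurableSet (B (n + 1)) := ℱ.le _ _ (hBm _)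
      have hsub : B n ⊆ B (n + 1) := fun ω ⟨k, hk, h⟩ => ⟨k, by omega, h⟩
      have h1 := hstep n _ (hBm n).compl
      have h2 : ∫⁻ ω in (B n)ᶜ, S (n + 1) ω ∂μ =
          ∫⁻ ω in B (n + 1) \ B n, S (n + 1) ω ∂μ + ∫⁻ ω in (B (n + 1))ᶜ, S (n + 1) ω ∂μ := by
        rw [← lintegral_union hm2.compl]
        · congr 2
          ext ω
          have := @hsub ω
          simp only [Set.mem_compl_iff, Set.mem_union, Set.mem_sdiff]
          tauto
        · rw [Set.disjoint_left]
          intro ω h h'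
          exact h' h.1
      have h3 : c * μ (B (n + 1) \ B n) ≤ ∫⁻ ω in B (n + 1) \ B n, S (n + 1) ω ∂μ := by
        refine hcheb _ _ (hm2.diff hm1) ?_
        rintro ω ⟨⟨k, hk, h⟩, h'⟩
        rcases Nat.lt_or_ge k (n + 1) with hk' | hk'
        · exact absurd ⟨k, by omega, h⟩ h'
        · obtain rfl : k = n + 1 := by omega
          exact h
      have h4 : μ (B (n + 1)) = μ (B n) + μ (B (n + 1) \ B n) := by
        rw [← measure_union Set.disjoint_sdiff_right (hm2.diff hm1), Set.union_sdiff_cancel hsub]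
      rw [h4, mul_add, add_assoc]
      gcongr
      refine le_trans ?_ h1
      rw [h2]
      gcongr
  have hU : {ω | ∃ n, c ≤ S n ω} = ⋃ n, B n := by
    ext ω
    simp only [hB, Set.mem_ofPred_eq, Set.mem_iUnion]
    exact ⟨fun ⟨n, h⟩ => ⟨n, n, le_rfl, h⟩, fun ⟨_, k, _, h⟩ => ⟨k, h⟩⟩
  have hmono : Monotone B := fun a b hab ω ⟨k, hk, h⟩ => ⟨k, hk.trans hab, h⟩
  rw [hU, hmono.measure_iUnion, ENNReal.mul_iSup]
  exact iSup_le fun n => le_trans le_self_add (hmain n)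

lemma aux_symm {H : Type*} [NormedAddCommGroup H] [InnerProductSpace ℝ H] [CompleteSpace H]
    {Q R : H →L[ℝ] H} (hQ : Q.IsPositive) (h : R ∘L Q = 1 ∧ Q ∘L R = 1) (x y : H) :
    ⟪R x, y⟫ = ⟪x, R y⟫ := by
  have h2 : ∀ z, Q (R z) = z := fun z => by
    simpa using congrArg (fun L : H →L[ℝ] H => L z) h.2
  have hs : ∀ a b, ⟪Q a, b⟫ = ⟪a, Q b⟫ := fun a b => hQ.isSymmetric a b
  conv_lhs => rw [← h2 y]
  rw [← hs, h2]

lemma aux_sherman {H : Type*} [NormedAddCommGroup H] [InnerProductSpace ℝ H] [CompleteSpace H]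
    {Q R Q' R' A : H →L[ℝ] H} (x : H) (hQ : Q.IsPositive)
    (h : R ∘L Q = 1 ∧ Q ∘L R = 1) (h' : R' ∘L Q' = 1 ∧ Q' ∘L R' = 1)
    (hA : Q ∘L Q = A) (hA' : Q' ∘L Q' = A + outerProd x) :
    R' ∘L R' = R ∘L R - (1 + ⟪x, R (R x)⟫)⁻¹ • outerProd (R (R x)) := by
  have e1 : ∀ z, R (Q z) = z := fun z => by
    simpa using congrArg (fun L : H →L[ℝ] H => L z) h.1
  have e2' : ∀ z, Q' (R' z) = z := fun z => by
    simpa using congrArg (fun L : H →L[ℝ] H => L z) h'.2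
  have hs := aux_symm hQ h
  have hs0 : 0 ≤ ⟪x, R (R x)⟫ := by
    rw [← hs]; exact real_inner_self_nonneg
  ext y
  set z := R' (R' y) with hz
  have hy : y = Q (Q z) + ⟪x, z⟫ • x := by
    have := congrArg (fun L : H →L[ℝ] H => L z) hA'
    rw [← hA] at this
    simp only [ContinuousLinearMap.comp_apply, ContinuousLinearMap.add_apply, outerProd,
      ContinuousLinearMap.smulRight_apply, innerSL_apply_apply] at this
    rw [← this, hz, e2', e2']
  have hTy : R (R y) = z + ⟪x, z⟫ • R (R x) := by
    conv_lhs => rw [hy]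
    simp [e1]
  have hin : ⟪R (R x), y⟫ = ⟪x, z⟫ * (1 + ⟪x, R (R x)⟫) := by
    rw [hs, hs, hTy, inner_add_right, real_inner_smul_right]; ring
  simp only [ContinuousLinearMap.comp_apply, ContinuousLinearMap.sub_apply, outerProd,
    ContinuousLinearMap.smulRight_apply, innerSL_apply_apply, ContinuousLinearMap.smul_apply]
  rw [← hz, hTy, hin, smul_smul]
  have : (1 + ⟪x, R (R x)⟫)⁻¹ * (⟪x, z⟫ * (1 + ⟪x, R (R x)⟫)) = ⟪x, z⟫ := by
    field_simp
  rw [this]; simp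

lemma aux_contr {H : Type*} [NormedAddCommGroup H] [InnerProductSpace ℝ H] [CompleteSpace H]
    {Q R Q' R' A : H →L[ℝ] H} (x : H) (hQ : Q.IsPositive) (hQ' : Q'.IsPositive)
    (h : R ∘L Q = 1 ∧ Q ∘L R = 1) (h' : R' ∘L Q' = 1 ∧ Q' ∘L R' = 1)
    (hA : Q ∘L Q = A) (hA' : Q' ∘L Q' = A + outerProd x) :
    (∀ y, ‖R' y‖ ≤ ‖R y‖) ∧ ‖R' x‖ ≤ 1 := by
  have hsh := aux_sherman x hQ h h' hA hA'
  have hs := aux_symm hQ h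
  have hs' := aux_symm hQ' h'
  have hs0 : 0 ≤ ⟪x, R (R x)⟫ := by
    rw [← hs]; exact real_inner_self_nonneg
  have key : ∀ y, ‖R' y‖ ^ 2 = ‖R y‖ ^ 2 - (1 + ⟪x, R (R x)⟫)⁻¹ * ⟪R (R x), y⟫ ^ 2 := by
    intro y
    have := congrArg (fun L : H →L[ℝ] H => ⟪y, L y⟫) hsh
    simp only [ContinuousLinearMap.comp_apply, ContinuousLinearMap.sub_apply, outerProd,
      ContinuousLinearMap.smulRight_apply, innerSL_apply_apply,
      ContinuousLinearMap.smul_apply, inner_sub_right, real_inner_smul_right] at this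
    rw [← hs, ← hs', real_inner_self_eq_norm_sq, real_inner_self_eq_norm_sq,
      real_inner_comm (R (R x)) y] at this
    rw [this]; ring
  refine ⟨fun y => ?_, ?_⟩
  · refine le_of_sq_le_sq ?_ (norm_nonneg _)
    rw [key y]
    have : 0 ≤ (1 + ⟪x, R (R x)⟫)⁻¹ * ⟪R (R x), y⟫ ^ 2 := by positivity
    linarith
  · refine le_of_sq_le_sq ?_ zero_le_one
    rw [key x, ← real_inner_self_eq_norm_sq, hs, real_inner_comm x (R (R x))]
    set s := ⟪x, R (R x)⟫
    have : s - (1 + s)⁻¹ * s ^ 2 = s / (1 + s) := by field_simp; ring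
    rw [this, one_pow, div_le_one (by linarith)]
    linarith

theorem stmt_1
    {H : Type*} [NormedAddCommGroup H] [InnerProductSpace ℝ H] [CompleteSpace H]
    [SecondCountableTopology H]
    {Ω : Type*} {m0 : MeasurableSpace Ω} {μ : Measure Ω} [IsProbabilityMeasure μ]
    (ℱ : Filtration ℕ m0)
    (X : ℕ → Ω → H) (ε : ℕ → Ω → ℝ)
    (hX : ∀ t, 1 ≤ t → StronglyMeasurable[ℱ (t - 1)] (X t))
    (hεmeas : ∀ t, 1 ≤ t → StronglyMeasurable[ℱ t] (ε t))
    (hεint : ∀ t, 1 ≤ t → Integrable (ε t) μ)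
    (hε0 : ∀ t, 1 ≤ t → μ[ε t | ℱ (t - 1)] =ᵐ[μ] 0)
    (ρ : ℝ) (hρ : 0 < ρ)
    (Q Qinv : ℕ → Ω → H →L[ℝ] H)
    (hQpos : ∀ t ω, (Q t ω).IsPositive)
    (hQsq : ∀ t ω, Q t ω ∘L Q t ω =
      ρ • (1 : H →L[ℝ] H) + ∑ i ∈ Finset.Icc 1 t, outerProd (X i ω))
    (hQinv : ∀ t ω, Qinv t ω ∘L Q t ω = 1 ∧ Q t ω ∘L Qinv t ω = 1)
    (l : ℝ) (hl : 0 < l)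
    (hmgf : ∀ t, 1 ≤ t → Integrable (fun ω => Real.exp (l * |ε t ω|)) μ)
    (e : ℕ → Ω → ℝ)
    (he : ∀ t ω, e t ω = ‖Qinv t ω (X t ω)‖ ^ 2 *
      (μ[fun ω' => Real.exp (l * |ε t ω'|) - l * |ε t ω'| - 1 | ℱ (t - 1)]) ω)
    (δ : ℝ) (hδ : δ ∈ Set.Ioo (0 : ℝ) 1) :
    ENNReal.ofReal (1 - δ) ≤
      μ {ω | ∀ t, 1 ≤ t →
        ‖Qinv t ω (∑ i ∈ Finset.Icc 1 t, ε i ω • X i ω)‖ ≤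
          ((∑ i ∈ Finset.Icc 1 t, e i ω) + Real.log (2 / δ)) / l} := by
  have hsucc : ∀ n ω, Q (n + 1) ω ∘L Q (n + 1) ω =
      (ρ • (1 : H →L[ℝ] H) + ∑ i ∈ Finset.Icc 1 n, outerProd (X i ω)) + outerProd (X (n + 1) ω) := by
    intro n ω
    rw [hQsq, Finset.sum_Icc_succ_top (by omega), add_assoc]
  set T : ℕ → Ω → H →L[ℝ] H := fun n ω => Qinv n ω ∘L Qinv n ω with hT
  have hTsucc : ∀ n ω, T (n + 1) ω = T n ω -
      (1 + ⟪X (n + 1) ω, T n ω (X (n + 1) ω)⟫)⁻¹ • outerProd (T n ω (X (n + 1) ω)) := fun n ω =>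
    aux_sherman (X (n + 1) ω) (hQpos n ω) (hQinv n ω) (hQinv (n + 1) ω) (hQsq n ω) (hsucc n ω)
  have hcontr := fun n ω =>
    aux_contr (X (n + 1) ω) (hQpos n ω) (hQpos (n + 1) ω) (hQinv n ω) (hQinv (n + 1) ω) (hQsq n ω)
      (hsucc n ω)
  have hsymm := fun n ω => aux_symm (hQpos n ω) (hQinv n ω)
  have hT0 : ∀ ω, T 0 ω = ρ⁻¹ • (1 : H →L[ℝ] H) := by
    intro ω
    ext y
    have e2 : ∀ z, Q 0 ω (Qinv 0 ω z) = z := fun z => by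
      simpa using congrArg (fun L : H →L[ℝ] H => L z) (hQinv 0 ω).2
    have := congrArg (fun L : H →L[ℝ] H => L (T 0 ω y)) (hQsq 0 ω)
    simp [hT, e2] at this
    simp [hT]
    rw [eq_inv_smul_iff₀ hρ.ne']
    exact this.symm
  have hX' : ∀ n, StronglyMeasurable[ℱ n] (X (n + 1)) := fun n => by
    simpa using hX (n + 1) (by omega)
  have hTstep : ∀ n, StronglyMeasurable[ℱ n] (T n) → StronglyMeasurable[ℱ n] (T (n + 1)) := by
    intro n ih
    have h1 : StronglyMeasurable[ℱ n] (fun ω => T n ω (X (n + 1) ω)) :=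
      isBoundedBilinearMap_apply.continuous.comp_stronglyMeasurable (ih.prodMk (hX' n))
    have hcont : Continuous (fun x : H => outerProd x) := by
      unfold outerProd
      fun_prop
    have h2 := hcont.comp_stronglyMeasurable h1
    have h3 : StronglyMeasurable[ℱ n] (fun ω => (1 + ⟪X (n + 1) ω, T n ω (X (n + 1) ω)⟫)⁻¹) :=
      (((hX' n).inner h1).measurable.const_add 1).inv.stronglyMeasurable
    have h4 := ih.sub (h3.smul h2)
    have h5 : T (n + 1) = _ := funext (hTsucc n)
    rw [h5]
    exact h4
  have hTm : ∀ n, StronglyMeasurable[ℱ n] (T n) := by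
    intro n
    induction n with
    | zero =>
      have : T 0 = fun _ => ρ⁻¹ • (1 : H →L[ℝ] H) := funext hT0
      rw [this]
      exact stronglyMeasurable_const
    | succ n ih => exact (hTstep n ih).mono (ℱ.mono (Nat.le_succ n))
  have hTm1 := fun n => hTstep n (hTm n)
  set M : ℕ → Ω → H := fun n ω => ∑ i ∈ Finset.Icc 1 n, ε i ω • X i ω with hM
  have hMs : ∀ n ω, M (n + 1) ω = M n ω + ε (n + 1) ω • X (n + 1) ω := fun n ω => by
    simp only [hM]
    rw [Finset.sum_Icc_succ_top (by omega)]
  have hMm : ∀ n, StronglyMeasurable[ℱ n] (M n) := by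
    intro n
    induction n with
    | zero =>
      have : M 0 = fun _ => 0 := by funext ω; simp [hM]
      rw [this]
      exact stronglyMeasurable_const
    | succ n ih =>
      have : M (n + 1) = _ := funext (hMs n)
      rw [this]
      exact (ih.mono (ℱ.mono (Nat.le_succ n))).add
        ((hεmeas (n + 1) (by omega)).smul ((hX' n).mono (ℱ.mono (Nat.le_succ n))))
  have hquad : ∀ n k (Y Z : Ω → H), StronglyMeasurable[ℱ n] (T k) → StronglyMeasurable[ℱ n] Y →
      StronglyMeasurable[ℱ n] Z →
      StronglyMeasurable[ℱ n] (fun ω => ⟪Qinv k ω (Y ω), Qinv k ω (Z ω)⟫) := by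
    intro n k Y Z hTk hY hZ
    have h1 : StronglyMeasurable[ℱ n] (fun ω => T k ω (Z ω)) :=
      isBoundedBilinearMap_apply.continuous.comp_stronglyMeasurable (hTk.prodMk hZ)
    have h2 := hY.inner (𝕜 := ℝ) h1
    have : (fun ω => ⟪Qinv k ω (Y ω), Qinv k ω (Z ω)⟫) = fun ω => ⟪Y ω, T k ω (Z ω)⟫ := by
      funext ω
      rw [hsymm k ω]
      rfl
    rw [this]
    exact h2
  have hnormm : ∀ n k (Y : Ω → H), StronglyMeasurable[ℱ n] (T k) → StronglyMeasurable[ℱ n] Y →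
      StronglyMeasurable[ℱ n] (fun ω => ‖Qinv k ω (Y ω)‖) := by
    intro n k Y hTk hY
    have h1 := Real.continuous_sqrt.comp_stronglyMeasurable (hquad n k Y Y hTk hY hY)
    have : (fun ω => ‖Qinv k ω (Y ω)‖) = fun ω => √⟪Qinv k ω (Y ω), Qinv k ω (Y ω)⟫ := by
      funext ω
      rw [real_inner_self_eq_norm_sq, Real.sqrt_sq (norm_nonneg _)]
    rw [this]
    exact h1
  set φ : ℕ → Ω → ℝ := fun t ω' => Real.exp (l * |ε t ω'|) - l * |ε t ω'| - 1 with hφ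
  have hφ0 : ∀ t ω, 0 ≤ φ t ω := fun t ω => by
    have := Real.add_one_le_exp (l * |ε t ω|)
    simp only [hφ]; linarith
  have hφi : ∀ t, 1 ≤ t → Integrable (φ t) μ := fun t ht =>
    ((hmgf t ht).sub ((hεint t ht).abs.const_mul l)).sub (integrable_const 1)
  have hem : ∀ n, StronglyMeasurable[ℱ n] (e (n + 1)) := by
    intro n
    have : e (n + 1) = fun ω => ‖Qinv (n + 1) ω (X (n + 1) ω)‖ ^ 2 * (μ[φ (n + 1) | ℱ n]) ω := by
      funext ω
      rw [he]
      rfl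
    rw [this]
    exact ((hnormm n (n + 1) _ (hTm1 n) (hX' n)).pow 2).mul stronglyMeasurable_condExp
  set E : ℕ → Ω → ℝ := fun n ω => ∑ i ∈ Finset.Icc 1 n, e i ω with hE
  have hEs : ∀ n ω, E (n + 1) ω = E n ω + e (n + 1) ω := fun n ω => by
    simp only [hE]
    rw [Finset.sum_Icc_succ_top (by omega)]
  have hEstep : ∀ n, StronglyMeasurable[ℱ n] (E n) → StronglyMeasurable[ℱ n] (E (n + 1)) := by
    intro n ih
    have : E (n + 1) = _ := funext (hEs n)
    rw [this]
    exact ih.add (hem n)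
  have hEm : ∀ n, StronglyMeasurable[ℱ n] (E n) := by
    intro n
    induction n with
    | zero =>
      have : E 0 = fun _ => 0 := by funext ω; simp [hE]
      rw [this]
      exact stronglyMeasurable_const
    | succ n ih => exact (hEstep n ih).mono (ℱ.mono (Nat.le_succ n))
  have hEm1 := fun n => hEstep n (hEm n)
  set S : ℕ → Ω → ℝ := fun n ω =>
    Real.exp (-E n ω) * Real.cosh (l * ‖Qinv n ω (M n ω)‖) with hS
  have hSm : ∀ n, StronglyMeasurable[ℱ n] (S n) := by
    intro n
    exact (Real.continuous_exp.comp_stronglyMeasurable (hEm n).neg).mul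
      (Real.continuous_cosh.comp_stronglyMeasurable
        ((hnormm n n _ (hTm n) (hMm n)).const_mul l))
  have hstep : ∀ n A, MeasurableSet[ℱ n] A →
      ∫⁻ ω in A, ENNReal.ofReal (S (n + 1) ω) ∂μ ≤ ∫⁻ ω in A, ENNReal.ofReal (S n ω) ∂μ := by
    intro n A hA
    have hA0 : MeasurableSet A := ℱ.le n _ hA
    set u : Ω → H := fun ω => Qinv (n + 1) ω (M n ω) with hu
    set g : Ω → H := fun ω => Qinv (n + 1) ω (X (n + 1) ω) with hg
    have hum : StronglyMeasurable[ℱ n] (fun ω => ‖u ω‖) := hnormm n (n + 1) _ (hTm1 n) (hMm n)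
    have hgm : StronglyMeasurable[ℱ n] (fun ω => ‖g ω‖) := hnormm n (n + 1) _ (hTm1 n) (hX' n)
    have hugm : StronglyMeasurable[ℱ n] (fun ω => ⟪u ω, g ω⟫) :=
      hquad n (n + 1) _ _ (hTm1 n) (hMm n) (hX' n)
    have hxm : StronglyMeasurable[ℱ n] (fun ω => Real.exp (-E (n + 1) ω)) :=
      Real.continuous_exp.comp_stronglyMeasurable (hEm1 n).neg
    have hcm : StronglyMeasurable[ℱ n] (fun ω => Real.cosh (l * ‖u ω‖)) :=
      Real.continuous_cosh.comp_stronglyMeasurable (hum.const_mul l)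
    have hsm : StronglyMeasurable[ℱ n] (fun ω => Real.sinh (l * ‖u ω‖)) :=
      Real.continuous_sinh.comp_stronglyMeasurable (hum.const_mul l)
    set p : Ω → ℝ := fun ω => Real.exp (-E (n + 1) ω) * Real.cosh (l * ‖u ω‖) with hp
    set q : Ω → ℝ := fun ω => Real.exp (-E (n + 1) ω) * (Real.cosh (l * ‖u ω‖) * ‖g ω‖ ^ 2) with hq
    set r : Ω → ℝ := fun ω => Real.exp (-E (n + 1) ω) *
      (Real.sinh (l * ‖u ω‖) / ‖u ω‖ * l * ⟪u ω, g ω⟫) with hr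
    have hpm : StronglyMeasurable[ℱ n] p := hxm.mul hcm
    have hqm : StronglyMeasurable[ℱ n] q := hxm.mul (hcm.mul (hgm.pow 2))
    have hrm : StronglyMeasurable[ℱ n] r := by
      refine hxm.mul (StronglyMeasurable.mul (StronglyMeasurable.mul ?_ stronglyMeasurable_const) hugm)
      exact (hsm.measurable.div hum.measurable).stronglyMeasurable
    have hp0 : ∀ ω, 0 ≤ p ω := fun ω => mul_nonneg (Real.exp_pos _).le (Real.cosh_pos _).le
    have hq0 : ∀ ω, 0 ≤ q ω := fun ω =>
      mul_nonneg (Real.exp_pos _).le (mul_nonneg (Real.cosh_pos _).le (sq_nonneg _))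
    have hWle : ∀ ω, S (n + 1) ω ≤ p ω + q ω * φ (n + 1) ω + r ω * ε (n + 1) ω := by
      intro ω
      have h1 := aux_pinelis (u ω) (g ω) (hcontr n ω).2 l (ε (n + 1) ω) hl
      have h2 : Qinv (n + 1) ω (M (n + 1) ω) = u ω + ε (n + 1) ω • g ω := by
        rw [hMs, map_add, map_smul]
      have h3 := mul_le_mul_of_nonneg_left h1 (Real.exp_pos (-E (n + 1) ω)).le
      simp only [hS]
      rw [h2]
      refine h3.trans (le_of_eq ?_)
      simp only [hp, hq, hr, hφ]
      ring
    have hrb : ∀ ω, |r ω * ε (n + 1) ω| ≤ p ω + q ω * φ (n + 1) ω := by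
      intro ω
      have h1 := aux_drift (u ω) (g ω) l (ε (n + 1) ω) hl
      have h3 := mul_le_mul_of_nonneg_left h1 (Real.exp_pos (-E (n + 1) ω)).le
      have h4 : r ω * ε (n + 1) ω = Real.exp (-E (n + 1) ω) *
        (Real.sinh (l * ‖u ω‖) / ‖u ω‖ * l * ⟪u ω, g ω⟫ * ε (n + 1) ω) := by
        simp only [hr]; ring
      rw [h4, abs_mul, abs_of_pos (Real.exp_pos _)]
      refine h3.trans (le_of_eq ?_)
      simp only [hp, hq, hφ]
      ring
    have hs : ∀ ω, p ω + q ω * (μ[φ (n + 1) | ℱ n]) ω ≤ S n ω := by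
      intro ω
      have h1 : e (n + 1) ω = ‖g ω‖ ^ 2 * (μ[φ (n + 1) | ℱ n]) ω := by
        rw [he]
        rfl
      have h2 : p ω + q ω * (μ[φ (n + 1) | ℱ n]) ω = p ω * (e (n + 1) ω + 1) := by
        rw [h1]; simp only [hp, hq]; ring
      rw [h2]
      have h3 : Real.cosh (l * ‖u ω‖) ≤ Real.cosh (l * ‖Qinv n ω (M n ω)‖) := by
        rw [Real.cosh_le_cosh, abs_of_nonneg (by positivity), abs_of_nonneg (by positivity)]
        exact mul_le_mul_of_nonneg_left ((hcontr n ω).1 _) hl.le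
      calc p ω * (e (n + 1) ω + 1) ≤ p ω * Real.exp (e (n + 1) ω) :=
            mul_le_mul_of_nonneg_left (Real.add_one_le_exp _) (hp0 ω)
        _ = Real.exp (-E n ω) * Real.cosh (l * ‖u ω‖) := by
            have : Real.exp (-E n ω) = Real.exp (-E (n + 1) ω) * Real.exp (e (n + 1) ω) := by
              rw [← Real.exp_add, hEs]; congr 1; ring
            rw [this]; simp only [hp]; ring
        _ ≤ S n ω := mul_le_mul_of_nonneg_left h3 (Real.exp_pos _).le
    have hfinal := aux_step (μ := μ) (ℱ.le n) (hφi (n + 1) (by omega)) (hφ0 (n + 1))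
      (hεint (n + 1) (by omega)) (by simpa using hε0 (n + 1) (by omega))
      (hpm.indicator hA) (hqm.indicator hA) (hrm.indicator hA)
      (fun ω => Set.indicator_nonneg (fun ω _ => hp0 ω) ω)
      (fun ω => Set.indicator_nonneg (fun ω _ => hq0 ω) ω)
      (fun ω => by
        by_cases h : ω ∈ A
        · simpa [h] using hrb ω
        · simp [h])
      (s := A.indicator (S n))
      (Eventually.of_forall fun ω => by
        by_cases h : ω ∈ A
        · simpa [h] using hs ω
        · simp [h])
    rw [← lintegral_indicator hA0, ← lintegral_indicator hA0]
    refine le_trans (lintegral_mono fun ω => ?_) (hfinal.trans (lintegral_mono fun ω => ?_))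
    · by_cases h : ω ∈ A
      · simpa [h] using ENNReal.ofReal_le_ofReal (hWle ω)
      · simp [h]
    · by_cases h : ω ∈ A
      · simp [h]
      · simp [h]
  have hville := aux_ville (μ := μ) ℱ (fun n ω => ENNReal.ofReal (S n ω))
    (fun n => (hSm n).measurable.ennreal_ofReal) hstep (ENNReal.ofReal (1 / δ))
  have hS0 : ∀ ω, S 0 ω = 1 := fun ω => by simp [hS, hE, hM]
  simp only [hS0, ENNReal.ofReal_one, lintegral_const, measure_univ, mul_one] at hville
  set B : Set Ω := {ω | ∃ n, ENNReal.ofReal (1 / δ) ≤ ENNReal.ofReal (S n ω)} with hB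
  have hBm : MeasurableSet B := by
    have : B = ⋃ n, {ω | ENNReal.ofReal (1 / δ) ≤ ENNReal.ofReal (S n ω)} := by
      ext ω; simp [hB]
    rw [this]
    exact MeasurableSet.iUnion fun n =>
      ((hSm n).mono (ℱ.le n)).measurable.ennreal_ofReal measurableSet_Ici
  have hδ0 := hδ.1
  have hBle : μ B ≤ ENNReal.ofReal δ := by
    have h1 := mul_le_mul_right hville (ENNReal.ofReal δ)
    rw [← mul_assoc, ← ENNReal.ofReal_mul hδ0.le, mul_one_div_cancel hδ0.ne', ENNReal.ofReal_one,
      one_mul, mul_one] at h1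
    exact h1
  have hsub : Bᶜ ⊆ {ω | ∀ t, 1 ≤ t →
        ‖Qinv t ω (∑ i ∈ Finset.Icc 1 t, ε i ω • X i ω)‖ ≤
          ((∑ i ∈ Finset.Icc 1 t, e i ω) + Real.log (2 / δ)) / l} := by
    intro ω hω t _
    have h1 : S t ω < 1 / δ := by
      by_contra h
      exact hω ⟨t, ENNReal.ofReal_le_ofReal (not_lt.1 h)⟩
    change ‖Qinv t ω (M t ω)‖ ≤ (E t ω + Real.log (2 / δ)) / l
    rw [le_div_iff₀ hl]
    have h2 : Real.exp (l * ‖Qinv t ω (M t ω)‖) ≤ 2 * Real.cosh (l * ‖Qinv t ω (M t ω)‖) := by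
      rw [Real.cosh_eq]
      have := Real.exp_pos (-(l * ‖Qinv t ω (M t ω)‖))
      linarith
    have h3 : Real.exp (l * ‖Qinv t ω (M t ω)‖ - E t ω) ≤ 2 / δ := by
      rw [sub_eq_neg_add, Real.exp_add]
      calc _ ≤ Real.exp (-E t ω) * (2 * Real.cosh (l * ‖Qinv t ω (M t ω)‖)) :=
            mul_le_mul_of_nonneg_left h2 (Real.exp_pos _).le
        _ = 2 * S t ω := by simp only [hS]; ring
        _ ≤ 2 * (1 / δ) := by linarith
        _ = 2 / δ := by ring
    have h4 := (Real.le_log_iff_exp_le (by positivity)).2 h3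
    linarith
  calc ENNReal.ofReal (1 - δ) = 1 - ENNReal.ofReal δ := by
        rw [ENNReal.ofReal_sub _ hδ0.le, ENNReal.ofReal_one]
    _ ≤ 1 - μ B := tsub_le_tsub_left hBle _
    _ = μ Bᶜ := by rw [prob_compl_eq_one_sub hBm]
    _ ≤ _ := measure_mono hsub
end

section
/- Fix an integer n ≥ 1 and δ ∈ (0,1). Suppose the noises satisfy the Bernstein condition with parameters (σ_t, B): E[|ε_t|^m | F_{t-1}] ≤ (1/2) m! B^{m−2} σ_t² for all m ≥ 2 and all 1 ≤ t ≤ n, with σ_t F_{t-1}-measurable. Suppose moreover that Σ_{i=1}^n σ_i² ‖G_i‖² ≤ C_n² almost surely, where C_n ≥ 0 is a deterministic constant. Then with probability at least 1 − δ, sup_{1 ≤ t ≤ n} ‖(ρI + V_t)^{-1/2} M_t‖ ≤ B log(2/δ) + C_n sqrt(2 log(2/δ)). -/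
open MeasureTheory Filter Real
open scoped RealInnerProductSpace

lemma convex_cosh_sqrt {x y c d : ℝ} (hx : 0 ≤ x) (hy : 0 ≤ y) (hc : 0 ≤ c) (hd : 0 ≤ d) (h : c + d = 1) :
    cosh (√(c * x + d * y)) ≤ c * cosh (√x) + d * cosh (√y) := by
  have key : ∀ z : ℝ, 0 ≤ z → HasSum (fun n : ℕ => z ^ n / (2 * n).factorial) (cosh (√z)) := by
    intro z hz
    have := Real.hasSum_cosh (√z)
    simpa only [pow_mul, Real.sq_sqrt hz] using this
  refine hasSum_le ?_ (key _ (by positivity)) (((key x hx).mul_left c).add ((key y hy).mul_left d))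
  intro n
  have := (convexOn_pow n).2 hx hy hc hd h
  simp only [smul_eq_mul] at this
  calc _ ≤ (c * x ^ n + d * y ^ n) / ((2*n).factorial : ℝ) := by gcongr
    _ = _ := by ring

lemma pinelis {α β p : ℝ} (hα : 0 ≤ α) (hβ : 0 ≤ β) (hp : |p| ≤ α * β) :
    cosh (√(α ^ 2 + β ^ 2 + 2 * p)) ≤ cosh α * (exp β - β) + p * (sinh α / α) := by
  have hs : β ≤ sinh β := Real.self_le_sinh_iff.2 hβ
  have hca := Real.cosh_pos α
  have e := Real.cosh_add_sinh β
  rcases hα.eq_or_lt with h0 | hα'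
  · have : p = 0 := by rw [← h0] at hp; simpa using hp
    subst this; subst h0
    simp only [ne_eq, OfNat.ofNat_ne_zero, not_false_eq_true, zero_pow, zero_add, mul_zero, add_zero, Real.sqrt_sq hβ, cosh_zero]
    linarith
  rcases hβ.eq_or_lt with h0 | hβ'
  · have : p = 0 := by rw [← h0] at hp; simpa using hp
    subst this; subst h0
    simp [Real.sqrt_sq hα]
  obtain ⟨c, rfl⟩ : ∃ c, p = α * β * c := ⟨p / (α * β), by field_simp⟩
  have hc : |c| ≤ 1 := by
    rw [abs_mul, abs_of_pos (by positivity : 0 < α * β)] at hp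
    exact le_of_mul_le_mul_left (by simpa using hp) (by positivity : 0 < α * β)
  obtain ⟨h1, h2⟩ := abs_le.1 hc
  have hcv := convex_cosh_sqrt (sq_nonneg (α + β)) (sq_nonneg (α - β)) (c := (1 + c) / 2) (d := (1 - c)/2)
    (by linarith) (by linarith) (by ring)
  rw [show (1 + c) / 2 * (α + β)^2 + (1 - c)/2 * (α - β)^2 = α ^ 2 + β ^ 2 + 2 * (α * β * c) by ring,
    Real.sqrt_sq_eq_abs, Real.sqrt_sq_eq_abs, Real.cosh_abs, Real.cosh_abs, Real.cosh_add, Real.cosh_sub] at hcv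
  have hsa : 0 ≤ sinh α := Real.sinh_nonneg_iff.2 hα
  have hsc : sinh α ≤ cosh α := (Real.sinh_lt_cosh α).le
  have : α * β * c * (sinh α / α) = β * c * sinh α := by field_simp
  rw [this, ← e]
  have h3 : c * sinh α ≤ cosh α := by nlinarith
  nlinarith [mul_nonneg (sub_nonneg.2 h3) (sub_nonneg.2 hs)]

lemma nu_bound (ν : Measure ℝ) [IsProbabilityMeasure ν] {θ B s : ℝ} (hθ : 0 ≤ θ) (hB : 0 < B) (hθB : θ * B < 1)
    (hmomν : ∀ m : ℕ, Integrable (fun y => |y| ^ m) ν)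
    (hb : ∀ m : ℕ, 2 ≤ m → ∫ y, |y| ^ m ∂ν ≤ (1 / 2) * (Nat.factorial m : ℝ) * B ^ (m - 2) * s ^ 2) :
    Integrable (fun y => exp (θ * |y|) - 1 - θ * |y|) ν ∧
      ∫ y, (exp (θ * |y|) - 1 - θ * |y|) ∂ν ≤ θ ^ 2 * s ^ 2 / (2 * (1 - θ * B)) := by
  have hser : ∀ y : ℝ, HasSum (fun k : ℕ => (θ * |y|) ^ (k + 2) / ((k + 2).factorial : ℝ))
      (exp (θ * |y|) - 1 - θ * |y|) := by
    intro y
    have h := NormedSpace.expSeries_div_hasSum_exp (θ * |y|)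
    rw [← Real.exp_eq_exp_ℝ] at h
    have h2 := (hasSum_nat_add_iff' 2).2 h
    have e2 : exp (θ * |y|) - ∑ i ∈ Finset.range 2, (θ * |y|) ^ i / (i.factorial : ℝ) =
        exp (θ * |y|) - 1 - θ * |y| := by
      simp [Finset.sum_range_succ]; ring
    rw [e2] at h2
    exact h2
  have hnn : ∀ y : ℝ, 0 ≤ exp (θ * |y|) - 1 - θ * |y| := fun y =>
    (hser y).nonneg fun k => by positivity
  have hR : 0 ≤ θ ^ 2 * s ^ 2 / (2 * (1 - θ * B)) := by
    have : 0 < 1 - θ * B := by linarith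
    positivity
  have hgeo : HasSum (fun k : ℕ => (θ ^ 2 * s ^ 2 / 2) * (θ * B) ^ k) (θ ^ 2 * s ^ 2 / (2 * (1 - θ * B))) := by
    have := (hasSum_geometric_of_lt_one (by positivity : 0 ≤ θ * B) hθB).mul_left (θ ^ 2 * s ^ 2 / 2)
    have h1 : (1 - θ * B) ≠ 0 := by linarith
    have e2 : θ ^ 2 * s ^ 2 / (2 * (1 - θ * B)) = (θ ^ 2 * s ^ 2 / 2) * (1 - θ * B)⁻¹ := by
      field_simp
    rw [e2]
    exact this
  have hlin : ∫⁻ y, ENNReal.ofReal (exp (θ * |y|) - 1 - θ * |y|) ∂ν ≤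
      ENNReal.ofReal (θ ^ 2 * s ^ 2 / (2 * (1 - θ * B))) := by
    have e1 : ∀ y : ℝ, ENNReal.ofReal (exp (θ * |y|) - 1 - θ * |y|) =
        ∑' k : ℕ, ENNReal.ofReal ((θ * |y|) ^ (k + 2) / ((k + 2).factorial : ℝ)) := by
      intro y
      rw [← (hser y).tsum_eq, ENNReal.ofReal_tsum_of_nonneg (fun k => by positivity) (hser y).summable]
    simp_rw [e1]
    rw [lintegral_tsum (fun k => by fun_prop), ← hgeo.tsum_eq,
      ENNReal.ofReal_tsum_of_nonneg (fun k => by positivity) hgeo.summable]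
    refine ENNReal.tsum_le_tsum fun k => ?_
    have hi : Integrable (fun y => (θ * |y|) ^ (k + 2) / ((k + 2).factorial : ℝ)) ν := by
      simp_rw [mul_pow]
      exact ((hmomν (k + 2)).const_mul _).div_const _
    rw [← ofReal_integral_eq_lintegral_ofReal hi (ae_of_all _ fun y => by positivity)]
    refine ENNReal.ofReal_le_ofReal ?_
    simp_rw [mul_pow]
    rw [integral_div, integral_const_mul]
    have := hb (k + 2) (by omega)
    simp only [Nat.add_sub_cancel] at this
    have hf : (0 : ℝ) < (k + 2).factorial := by positivity
    rw [div_le_iff₀ hf]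
    calc θ ^ (k + 2) * ∫ y, |y| ^ (k + 2) ∂ν ≤ θ ^ (k + 2) * ((1 / 2) * ((k + 2).factorial : ℝ) * B ^ k * s ^ 2) := by
          gcongr
      _ = _ := by ring
  have hI : Integrable (fun y => exp (θ * |y|) - 1 - θ * |y|) ν := by
    refine ⟨by fun_prop, ?_⟩
    rw [hasFiniteIntegral_iff_ofReal (ae_of_all _ hnn)]
    exact hlin.trans_lt ENNReal.ofReal_lt_top
  refine ⟨hI, ?_⟩
  rw [← ofReal_integral_eq_lintegral_ofReal hI (ae_of_all _ hnn)] at hlin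
  exact (ENNReal.ofReal_le_ofReal_iff hR).1 hlin

lemma cond_step {Ω β : Type*} {mΩ : MeasurableSpace Ω} {mβ : MeasurableSpace β} {μ : Measure Ω}
    [IsProbabilityMeasure μ] {Z : Ω → β} (hZ : Measurable Z) {Y : Ω → ℝ} (hY : Measurable Y)
    (hmom : ∀ m : ℕ, Integrable (fun ω => |Y ω| ^ m) μ) (hYi : Integrable Y μ)
    (h0 : μ[Y | mβ.comap Z] =ᵐ[μ] 0)
    {B l : ℝ} (hB : 0 < B) (hl : 0 ≤ l) (hlB : l * B < 1) {s : β → ℝ} (hs : Measurable s)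
    (hbern : ∀ m : ℕ, 2 ≤ m → μ[fun ω => |Y ω| ^ m | mβ.comap Z] ≤ᵐ[μ]
        fun ω => (1 / 2) * (Nat.factorial m : ℝ) * B ^ (m - 2) * s (Z ω) ^ 2)
    {a b k : β → ℝ} (ha : Measurable a) (hb : Measurable b) (hk : Measurable k)
    (ha0 : ∀ z, 0 ≤ a z) (hb0 : ∀ z, 0 ≤ b z) (hb1 : ∀ z, b z ≤ 1)
    (hf0 : ∀ z y, 0 ≤ a z * (exp (l * b z * |y|) - l * b z * |y|) + k z * y) :
    ∫⁻ ω, ENNReal.ofReal (a (Z ω) * (exp (l * b (Z ω) * |Y ω|) - l * b (Z ω) * |Y ω|) + k (Z ω) * Y ω) ∂μ ≤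
      ∫⁻ ω, ENNReal.ofReal (a (Z ω) * exp (l ^ 2 / (2 * (1 - l * B)) * (s (Z ω) ^ 2 * b (Z ω) ^ 2))) ∂μ := by
  let κ := ProbabilityTheory.condDistrib Y Z μ
  have hpw : ∀ᵐ z ∂(μ.map Z), (∀ m : ℕ, Integrable (fun y => |y| ^ m) (κ z)) ∧ Integrable (fun y => y) (κ z) := by
    have h1 : ∀ f : ℝ → ℝ, Measurable f → Integrable (fun ω => f (Y ω)) μ → ∀ᵐ z ∂(μ.map Z), Integrable f (κ z) := by
      intro f hf hfi
      have : Integrable (fun p : β × ℝ => f p.2) (μ.map fun ω => (Z ω, Y ω)) := by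
        have hm : Measurable (fun p : β × ℝ => f p.2) := hf.comp measurable_snd
        rw [integrable_map_measure hm.aestronglyMeasurable (hZ.prodMk hY).aemeasurable]
        exact hfi
      exact Integrable.condDistrib_ae_map hY.aemeasurable this
    exact (ae_all_iff.2 fun m => h1 _ (by fun_prop) (hmom m)).and (h1 _ measurable_id hYi)
  have hpw' := ae_of_ae_map hZ.aemeasurable hpw
  have hbern' : ∀ᵐ ω ∂μ, ∀ m : ℕ, 2 ≤ m → ∫ y, |y| ^ m ∂(κ (Z ω)) ≤
      (1 / 2) * (Nat.factorial m : ℝ) * B ^ (m - 2) * s (Z ω) ^ 2 := by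
    refine ae_all_iff.2 fun m => ?_
    by_cases hm : 2 ≤ m
    · filter_upwards [hbern m hm, ProbabilityTheory.condExp_ae_eq_integral_condDistrib hZ hY.aemeasurable
        (f := fun y : ℝ => |y| ^ m) (by fun_prop) (hmom m)] with ω h1 h2 _
      rw [h2] at h1
      exact h1
    · exact ae_of_all _ fun ω h => absurd h hm
  have h0' : ∀ᵐ ω ∂μ, ∫ y, y ∂(κ (Z ω)) = 0 := by
    filter_upwards [h0, ProbabilityTheory.condExp_ae_eq_integral_condDistrib' hZ hYi] with ω h1 h2
    rw [← h2]; exact h1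
  let g : β × ℝ → ENNReal := fun p =>
    ENNReal.ofReal (a p.1 * (exp (l * b p.1 * |p.2|) - l * b p.1 * |p.2|) + k p.1 * p.2)
  have hg : Measurable g := by fun_prop
  have e : ∫⁻ ω, g (Z ω, Y ω) ∂μ = ∫⁻ ω, ∫⁻ y, g (Z ω, y) ∂(κ (Z ω)) ∂μ := by
    rw [← lintegral_map hg (by fun_prop : Measurable fun ω => (Z ω, Y ω)),
      ← ProbabilityTheory.compProd_map_condDistrib hY.aemeasurable, Measure.lintegral_compProd hg,
      lintegral_map (by exact hg.lintegral_kernel_prod_right') hZ]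
  change ∫⁻ ω, g (Z ω, Y ω) ∂μ ≤ _
  rw [e]
  refine lintegral_mono_ae ?_
  filter_upwards [hpw', hbern', h0'] with ω ⟨hi, hi1⟩ hbb hz
  have hθB : l * b (Z ω) * B ≤ l * B := by
    have := mul_le_mul_of_nonneg_left (hb1 (Z ω)) (by positivity : 0 ≤ l * B)
    nlinarith
  have hθ : 0 ≤ l * b (Z ω) := mul_nonneg hl (hb0 _)
  obtain ⟨hI, hle⟩ := nu_bound (κ (Z ω)) hθ hB (hθB.trans_lt hlB) hi hbb
  have hfe : (fun y => a (Z ω) * (exp (l * b (Z ω) * |y|) - l * b (Z ω) * |y|) + k (Z ω) * y) =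
      fun y => a (Z ω) * (exp (l * b (Z ω) * |y|) - 1 - l * b (Z ω) * |y|) + a (Z ω) + k (Z ω) * y := by
    funext y; ring
  have hI2 : Integrable (fun y => a (Z ω) * (exp (l * b (Z ω) * |y|) - l * b (Z ω) * |y|) + k (Z ω) * y) (κ (Z ω)) := by
    rw [hfe]
    exact ((hI.const_mul _).add (integrable_const _)).add (hi1.const_mul _)
  change ∫⁻ y, ENNReal.ofReal (a (Z ω) * (exp (l * b (Z ω) * |y|) - l * b (Z ω) * |y|) + k (Z ω) * y) ∂(κ (Z ω)) ≤ _
  rw [← ofReal_integral_eq_lintegral_ofReal hI2 (ae_of_all _ fun y => hf0 _ y)]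
  refine ENNReal.ofReal_le_ofReal ?_
  have hI3 : Integrable (fun y => a (Z ω) * (exp (l * b (Z ω) * |y|) - 1 - l * b (Z ω) * |y|) + a (Z ω)) (κ (Z ω)) :=
    (hI.const_mul _).add (integrable_const _)
  rw [hfe, integral_add hI3 (hi1.const_mul _),
    integral_add (hI.const_mul _) (integrable_const _), integral_const_mul, integral_const_mul, hz, integral_const]
  simp only [probReal_univ, one_smul, mul_zero, add_zero]
  have h3 : (l * b (Z ω)) ^ 2 * s (Z ω) ^ 2 / (2 * (1 - l * b (Z ω) * B)) ≤
      l ^ 2 / (2 * (1 - l * B)) * (s (Z ω) ^ 2 * b (Z ω) ^ 2) := by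
    have : 0 < 1 - l * B := by linarith
    calc _ ≤ (l * b (Z ω)) ^ 2 * s (Z ω) ^ 2 / (2 * (1 - l * B)) := by gcongr
      _ = _ := by ring
  have h4 := Real.add_one_le_exp (l ^ 2 / (2 * (1 - l * B)) * (s (Z ω) ^ 2 * b (Z ω) ^ 2))
  have h5 := ha0 (Z ω)
  calc _ = a (Z ω) * (∫ y, (exp (l * b (Z ω) * |y|) - 1 - l * b (Z ω) * |y|) ∂(κ (Z ω)) + 1) := by ring
    _ ≤ _ := by gcongr; linarith

lemma symm_inv {H : Type*} [NormedAddCommGroup H] [InnerProductSpace ℝ H] [CompleteSpace H]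
    {Q T : H →L[ℝ] H} (hQ : Q.IsPositive) (h : T ∘L Q = 1 ∧ Q ∘L T = 1) (x y : H) :
    ⟪T x, y⟫ = ⟪x, T y⟫ := by
  have h2 : ∀ z, Q (T z) = z := fun z => by
    have := congrArg (fun F : H →L[ℝ] H => F z) h.2
    simpa using this
  calc ⟪T x, y⟫ = ⟪T x, Q (T y)⟫ := by rw [h2]
    _ = ⟪Q (T x), T y⟫ := (hQ.isSymmetric (T x) (T y)).symm
    _ = _ := by rw [h2]

lemma norm_sq_inv {H : Type*} [NormedAddCommGroup H] [InnerProductSpace ℝ H] [CompleteSpace H]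
    {Q T : H →L[ℝ] H} (hQ : Q.IsPositive) (h : T ∘L Q = 1 ∧ Q ∘L T = 1) (x : H) :
    ‖T x‖ ^ 2 = ⟪x, T (T x)⟫ := by
  rw [← symm_inv hQ h, real_inner_self_eq_norm_sq]

lemma sherman {H : Type*} [NormedAddCommGroup H] [InnerProductSpace ℝ H] [CompleteSpace H]
    {Q T Q' T' : H →L[ℝ] H} (hQ : Q.IsPositive) (h : T ∘L Q = 1 ∧ Q ∘L T = 1)
    (h' : T' ∘L Q' = 1 ∧ Q' ∘L T' = 1) (x : H)
    (hs : Q' ∘L Q' = Q ∘L Q + outerProd x) (y : H) :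
    T' (T' y) = T (T y) - (⟪x, T (T y)⟫ / (1 + ⟪x, T (T x)⟫)) • T (T x) := by
  have h1 : ∀ z, T' (Q' z) = z := fun z => by
    have := congrArg (fun F : H →L[ℝ] H => F z) h'.1
    simpa using this
  have h2 : ∀ z, Q (T z) = z := fun z => by
    have := congrArg (fun F : H →L[ℝ] H => F z) h.2
    simpa using this
  have h3 : ∀ z, Q' (Q' z) = Q (Q z) + ⟪x, z⟫ • x := fun z => by
    have := congrArg (fun F : H →L[ℝ] H => F z) hs
    simpa [outerProd] using this
  have hp : 0 ≤ ⟪x, T (T x)⟫ := by rw [← norm_sq_inv hQ h]; positivity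
  set p := ⟪x, T (T x)⟫ with hpd
  set q := ⟪x, T (T y)⟫ with hqd
  set z := T (T y) - (q / (1 + p)) • T (T x) with hz
  have h4 : Q' (Q' z) = y := by
    rw [h3]
    have e1 : Q (Q z) = y - (q / (1 + p)) • x := by
      simp only [hz, map_sub, map_smul, h2]
    have e2 : ⟪x, z⟫ = q / (1 + p) := by
      rw [hz, inner_sub_right, inner_smul_right, ← hpd, ← hqd]
      have : 1 + p ≠ 0 := by linarith
      field_simp
      ring
    rw [e1, e2]; abel
  rw [← h4, h1, h1]

lemma norm_mono {H : Type*} [NormedAddCommGroup H] [InnerProductSpace ℝ H] [CompleteSpace H]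
    {Q T Q' T' : H →L[ℝ] H} (hQ : Q.IsPositive) (h : T ∘L Q = 1 ∧ Q ∘L T = 1)
    (hQ' : Q'.IsPositive) (h' : T' ∘L Q' = 1 ∧ Q' ∘L T' = 1) (x : H)
    (hs : Q' ∘L Q' = Q ∘L Q + outerProd x) : (∀ y, ‖T' y‖ ≤ ‖T y‖) ∧ ‖T' x‖ ≤ 1 := by
  have hp : 0 ≤ ⟪x, T (T x)⟫ := by rw [← norm_sq_inv hQ h]; positivity
  constructor
  · intro y
    refine le_of_sq_le_sq ?_ (norm_nonneg _)
    rw [norm_sq_inv hQ' h', norm_sq_inv hQ h, sherman hQ h h' x hs, inner_sub_right, inner_smul_right]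
    have : ⟪y, T (T x)⟫ = ⟪x, T (T y)⟫ := by
      rw [← symm_inv hQ h, ← symm_inv hQ h, real_inner_comm]
    rw [this]
    have : 0 ≤ ⟪x, T (T y)⟫ / (1 + ⟪x, T (T x)⟫) * ⟪x, T (T y)⟫ := by
      rw [div_mul_eq_mul_div]
      exact div_nonneg (mul_self_nonneg _) (by linarith)
    linarith
  · refine le_of_sq_le_sq ?_ zero_le_one
    rw [norm_sq_inv hQ' h', sherman hQ h h' x hs, inner_sub_right, inner_smul_right]
    set p := ⟪x, T (T x)⟫
    have : p - p / (1 + p) * p = p / (1 + p) := by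
      have : 1 + p ≠ 0 := by linarith
      field_simp
      ring
    rw [this, one_pow, div_le_one (by linarith)]
    linarith

lemma meas_inv {H : Type*} [NormedAddCommGroup H] [InnerProductSpace ℝ H] [CompleteSpace H]
    {Ω : Type*} (X : ℕ → Ω → H) (ρ : ℝ) (hρ : 0 < ρ)
    (Q Qinv : ℕ → Ω → H →L[ℝ] H)
    (hQpos : ∀ t ω, (Q t ω).IsPositive)
    (hQsq : ∀ t ω, Q t ω ∘L Q t ω =
      ρ • (1 : H →L[ℝ] H) + ∑ i ∈ Finset.Icc 1 t, outerProd (X i ω))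
    (hQinv : ∀ t ω, Qinv t ω ∘L Q t ω = 1 ∧ Q t ω ∘L Qinv t ω = 1)
    (m : MeasurableSpace Ω) (t : ℕ) (hX : ∀ i, 1 ≤ i → i ≤ t → StronglyMeasurable[m] (X i))
    (y : Ω → H) (hy : StronglyMeasurable[m] y) :
    StronglyMeasurable[m] (fun ω => Qinv t ω (Qinv t ω (y ω))) := by
  induction t generalizing y with
  | zero =>
    have : (fun ω => Qinv 0 ω (Qinv 0 ω (y ω))) = fun ω => ρ⁻¹ • y ω := by
      funext ω
      have h1 : ∀ z, Qinv 0 ω (Q 0 ω z) = z := fun z => by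
        have := congrArg (fun F : H →L[ℝ] H => F z) (hQinv 0 ω).1
        simpa using this
      have h3 : ∀ z, Q 0 ω (Q 0 ω z) = ρ • z := fun z => by
        have := congrArg (fun F : H →L[ℝ] H => F z) (hQsq 0 ω)
        simpa using this
      have h4 : y ω = Q 0 ω (Q 0 ω (ρ⁻¹ • y ω)) := by
        rw [h3, smul_smul, mul_inv_cancel₀ hρ.ne', one_smul]
      conv_lhs => rw [h4, h1, h1]
    rw [this]
    exact hy.const_smul _
  | succ t ih =>
    have ih' := ih (fun i h1 h2 => hX i h1 (h2.trans (Nat.le_succ t)))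
    have hXt := hX (t + 1) (by omega) le_rfl
    have : (fun ω => Qinv (t + 1) ω (Qinv (t + 1) ω (y ω))) = fun ω =>
        Qinv t ω (Qinv t ω (y ω)) - (⟪X (t + 1) ω, Qinv t ω (Qinv t ω (y ω))⟫ /
          (1 + ⟪X (t + 1) ω, Qinv t ω (Qinv t ω (X (t + 1) ω))⟫)) • Qinv t ω (Qinv t ω (X (t + 1) ω)) := by
      funext ω
      refine sherman (hQpos t ω) (hQinv t ω) (hQinv (t + 1) ω) _ ?_ _
      rw [hQsq, hQsq, Finset.sum_Icc_succ_top (by omega), add_assoc]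
    rw [this]
    have a1 := ih' y hy
    have a2 := ih' _ hXt
    have b1 : Measurable[m] (fun ω => ⟪X (t + 1) ω, Qinv t ω (Qinv t ω (y ω))⟫) := (hXt.inner a1).measurable
    have b2 : Measurable[m] (fun ω => ⟪X (t + 1) ω, Qinv t ω (Qinv t ω (X (t + 1) ω))⟫) := (hXt.inner a2).measurable
    have b3 : StronglyMeasurable[m] (fun ω => ⟪X (t + 1) ω, Qinv t ω (Qinv t ω (y ω))⟫ /
          (1 + ⟪X (t + 1) ω, Qinv t ω (Qinv t ω (X (t + 1) ω))⟫)) :=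
      (b1.div (b2.const_add 1)).stronglyMeasurable
    exact a1.sub (b3.smul a2)

lemma maximal {Ω : Type*} {m0 : MeasurableSpace Ω} {μ : Measure Ω} [IsProbabilityMeasure μ]
    (ℱ : Filtration ℕ m0) (W : ℕ → Ω → ENNReal) (n : ℕ) (hW : ∀ t ≤ n, Measurable[ℱ t] (W t))
    (h0 : ∫⁻ ω, W 0 ω ∂μ ≤ 1)
    (hstep : ∀ t, t + 1 ≤ n → ∀ A, MeasurableSet[ℱ t] A → ∫⁻ ω in A, W (t + 1) ω ∂μ ≤ ∫⁻ ω in A, W t ω ∂μ)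
    (c : ENNReal) : c * μ {ω | ∃ t ≤ n, c ≤ W t ω} ≤ 1 := by
  have hDm : ∀ t ≤ n, MeasurableSet[ℱ t] {ω | ∃ s ≤ t, c ≤ W s ω} := by
    intro t ht
    have : {ω | ∃ s ≤ t, c ≤ W s ω} = ⋃ s ∈ Set.Iic t, {ω | c ≤ W s ω} := by ext; simp
    rw [this]
    refine MeasurableSet.biUnion (Set.to_countable _) fun s hs => ?_
    have := (hW s (le_trans hs ht))
    exact ℱ.mono hs _ (this measurableSet_Ici)
  have hmk : ∀ t ≤ n, ∀ A, MeasurableSet A → c * μ (A ∩ {ω | c ≤ W t ω}) +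
      ∫⁻ ω in A ∩ {ω | c ≤ W t ω}ᶜ, W t ω ∂μ ≤ ∫⁻ ω in A, W t ω ∂μ := by
    intro t ht A hA
    have hm : MeasurableSet {ω | c ≤ W t ω} := ℱ.le t _ (hW t ht measurableSet_Ici)
    rw [← lintegral_inter_add_sdiff (μ := μ) (W t) A hm, Set.sdiff_eq]
    gcongr
    rw [← setLIntegral_const]
    exact setLIntegral_mono' (hA.inter hm) fun ω h => h.2
  have main : ∀ t ≤ n, c * μ {ω | ∃ s ≤ t, c ≤ W s ω} +
      ∫⁻ ω in {ω | ∃ s ≤ t, c ≤ W s ω}ᶜ, W t ω ∂μ ≤ 1 := by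
    intro t
    induction t with
    | zero =>
      intro ht
      have := hmk 0 ht Set.univ MeasurableSet.univ
      simp only [Set.univ_inter, Measure.restrict_univ] at this
      simpa using this.trans h0
    | succ t ih =>
      intro ht
      have hD := hDm t (by omega)
      have h1 := ih (by omega)
      have h2 := hmk (t + 1) ht _ (ℱ.le t _ hD.compl)
      have h3 := hstep t ht _ hD.compl
      set D := {ω | ∃ s ≤ t, c ≤ W s ω} with hDd
      have e : {ω | ∃ s ≤ t + 1, c ≤ W s ω} = D ∪ (Dᶜ ∩ {ω | c ≤ W (t + 1) ω}) := by
        ext ω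
        simp only [hDd, Set.mem_union, Set.mem_inter_iff, Set.mem_compl_iff, Set.mem_setOf_eq]
        constructor
        · rintro ⟨s, hs, h⟩
          by_cases hD' : ∃ s ≤ t, c ≤ W s ω
          · exact Or.inl hD'
          · refine Or.inr ⟨hD', ?_⟩
            rcases Nat.lt_or_ge t s with h' | h'
            · have : s = t + 1 := by omega
              rwa [this] at h
            · exact absurd ⟨s, h', h⟩ hD'
        · rintro (⟨s, hs, h⟩ | ⟨_, h⟩)
          · exact ⟨s, by omega, h⟩
          · exact ⟨t + 1, le_rfl, h⟩
      have e2 : {ω | ∃ s ≤ t + 1, c ≤ W s ω}ᶜ = Dᶜ ∩ {ω | c ≤ W (t + 1) ω}ᶜ := by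
        rw [e]
        ext ω
        simp only [Set.mem_union, Set.mem_inter_iff, Set.mem_compl_iff]
        tauto
      rw [e2, e]
      calc _ ≤ c * (μ D + μ (Dᶜ ∩ {ω | c ≤ W (t + 1) ω})) +
            ∫⁻ ω in Dᶜ ∩ {ω | c ≤ W (t + 1) ω}ᶜ, W (t + 1) ω ∂μ := by
            gcongr
            exact measure_union_le _ _
        _ = c * μ D + (c * μ (Dᶜ ∩ {ω | c ≤ W (t + 1) ω}) +
            ∫⁻ ω in Dᶜ ∩ {ω | c ≤ W (t + 1) ω}ᶜ, W (t + 1) ω ∂μ) := by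
            rw [mul_add, add_assoc]
        _ ≤ c * μ D + ∫⁻ ω in Dᶜ, W t ω ∂μ := by
            gcongr
            exact h2.trans h3
        _ ≤ 1 := h1
  exact le_self_add.trans (main n le_rfl)

lemma meas_inner {H : Type*} [NormedAddCommGroup H] [InnerProductSpace ℝ H] [CompleteSpace H]
    {Ω : Type*} (X : ℕ → Ω → H) (ρ : ℝ) (hρ : 0 < ρ)
    (Q Qinv : ℕ → Ω → H →L[ℝ] H)
    (hQpos : ∀ t ω, (Q t ω).IsPositive)
    (hQsq : ∀ t ω, Q t ω ∘L Q t ω =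
      ρ • (1 : H →L[ℝ] H) + ∑ i ∈ Finset.Icc 1 t, outerProd (X i ω))
    (hQinv : ∀ t ω, Qinv t ω ∘L Q t ω = 1 ∧ Q t ω ∘L Qinv t ω = 1)
    (m : MeasurableSpace Ω) (t : ℕ) (hX : ∀ i, 1 ≤ i → i ≤ t → StronglyMeasurable[m] (X i))
    (y z : Ω → H) (hy : StronglyMeasurable[m] y) (hz : StronglyMeasurable[m] z) :
    Measurable[m] (fun ω => ⟪Qinv t ω (y ω), Qinv t ω (z ω)⟫) := by
  have : (fun ω => ⟪Qinv t ω (y ω), Qinv t ω (z ω)⟫) = fun ω => ⟪y ω, Qinv t ω (Qinv t ω (z ω))⟫ := by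
    funext ω
    exact symm_inv (hQpos t ω) (hQinv t ω) _ _
  rw [this]
  exact (hy.inner (meas_inv X ρ hρ Q Qinv hQpos hQsq hQinv m t hX z hz)).measurable

lemma meas_norm {H : Type*} [NormedAddCommGroup H] [InnerProductSpace ℝ H] [CompleteSpace H]
    {Ω : Type*} (X : ℕ → Ω → H) (ρ : ℝ) (hρ : 0 < ρ)
    (Q Qinv : ℕ → Ω → H →L[ℝ] H)
    (hQpos : ∀ t ω, (Q t ω).IsPositive)
    (hQsq : ∀ t ω, Q t ω ∘L Q t ω =
      ρ • (1 : H →L[ℝ] H) + ∑ i ∈ Finset.Icc 1 t, outerProd (X i ω))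
    (hQinv : ∀ t ω, Qinv t ω ∘L Q t ω = 1 ∧ Q t ω ∘L Qinv t ω = 1)
    (m : MeasurableSpace Ω) (t : ℕ) (hX : ∀ i, 1 ≤ i → i ≤ t → StronglyMeasurable[m] (X i))
    (y : Ω → H) (hy : StronglyMeasurable[m] y) :
    Measurable[m] (fun ω => ‖Qinv t ω (y ω)‖) := by
  have h := meas_inner X ρ hρ Q Qinv hQpos hQsq hQinv m t hX y y hy hy
  have : (fun ω => ‖Qinv t ω (y ω)‖) = fun ω => √(⟪Qinv t ω (y ω), Qinv t ω (y ω)⟫) := by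
    funext ω
    rw [real_inner_self_eq_norm_sq, Real.sqrt_sq (norm_nonneg _)]
  rw [this]
  exact h.sqrt

lemma cosh_step {H : Type*} [NormedAddCommGroup H] [InnerProductSpace ℝ H] (a g : H) {l : ℝ} (hl : 0 ≤ l) (y : ℝ) :
    cosh (l * ‖a + y • g‖) ≤ cosh (l * ‖a‖) * (exp (l * ‖g‖ * |y|) - l * ‖g‖ * |y|) +
      (l ^ 2 * ⟪a, g⟫ * (sinh (l * ‖a‖) / (l * ‖a‖))) * y := by
  have h1 : |l ^ 2 * ⟪a, g⟫ * y| ≤ (l * ‖a‖) * (l * ‖g‖ * |y|) := by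
    rw [abs_mul, abs_mul, abs_of_nonneg (sq_nonneg l)]
    have := abs_real_inner_le_norm a g
    calc l ^ 2 * |⟪a, g⟫| * |y| ≤ l ^ 2 * (‖a‖ * ‖g‖) * |y| := by gcongr
      _ = _ := by ring
  have h2 := pinelis (by positivity : 0 ≤ l * ‖a‖) (by positivity : 0 ≤ l * ‖g‖ * |y|) h1
  have h3 : (l * ‖a‖) ^ 2 + (l * ‖g‖ * |y|) ^ 2 + 2 * (l ^ 2 * ⟪a, g⟫ * y) = (l * ‖a + y • g‖) ^ 2 := by
    rw [mul_pow l ‖a + y • g‖, norm_add_sq_real, inner_smul_right, norm_smul, Real.norm_eq_abs]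
    ring
  rw [h3, Real.sqrt_sq (by positivity)] at h2
  refine h2.trans (le_of_eq ?_)
  ring

lemma tail_bound
    {H : Type*} [NormedAddCommGroup H] [InnerProductSpace ℝ H] [CompleteSpace H]
    {Ω : Type*} {m0 : MeasurableSpace Ω} {μ : Measure Ω} [IsProbabilityMeasure μ]
    (ℱ : Filtration ℕ m0)
    (X : ℕ → Ω → H) (ε : ℕ → Ω → ℝ)
    (hX : ∀ t, 1 ≤ t → StronglyMeasurable[ℱ (t - 1)] (X t))
    (hεmeas : ∀ t, 1 ≤ t → StronglyMeasurable[ℱ t] (ε t))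
    (hεint : ∀ t, 1 ≤ t → Integrable (ε t) μ)
    (hε0 : ∀ t, 1 ≤ t → μ[ε t | ℱ (t - 1)] =ᵐ[μ] 0)
    (ρ : ℝ) (hρ : 0 < ρ)
    (Q Qinv : ℕ → Ω → H →L[ℝ] H)
    (hQpos : ∀ t ω, (Q t ω).IsPositive)
    (hQsq : ∀ t ω, Q t ω ∘L Q t ω =
      ρ • (1 : H →L[ℝ] H) + ∑ i ∈ Finset.Icc 1 t, outerProd (X i ω))
    (hQinv : ∀ t ω, Qinv t ω ∘L Q t ω = 1 ∧ Q t ω ∘L Qinv t ω = 1)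
    (n : ℕ)
    (B : ℝ) (hB : 0 < B) (σ : ℕ → Ω → ℝ)
    (hσmeas : ∀ t, 1 ≤ t → t ≤ n → StronglyMeasurable[ℱ (t - 1)] (σ t))
    (hmom : ∀ t m, Integrable (fun ω => |ε t ω| ^ m) μ)
    (hbern : ∀ t, 1 ≤ t → t ≤ n → ∀ m : ℕ, 2 ≤ m →
      μ[fun ω => |ε t ω| ^ m | ℱ (t - 1)] ≤ᵐ[μ]
        fun ω => (1 / 2) * (Nat.factorial m : ℝ) * B ^ (m - 2) * σ t ω ^ 2)
    (C : ℝ)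
    (hCn : ∀ᵐ ω ∂μ, ∑ i ∈ Finset.Icc 1 n, σ i ω ^ 2 * ‖Qinv i ω (X i ω)‖ ^ 2 ≤ C ^ 2)
    (l : ℝ) (hl : 0 < l) (hlB : l * B < 1) (r δ : ℝ) (hδ : 0 < δ)
    (hr : l * r = Real.log (2 / δ) + l ^ 2 / (2 * (1 - l * B)) * C ^ 2) :
    μ {ω | ∃ t ≤ n, r ≤ ‖Qinv t ω (∑ i ∈ Finset.Icc 1 t, ε i ω • X i ω)‖} ≤ ENNReal.ofReal δ := by
  set K := l ^ 2 / (2 * (1 - l * B)) with hK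
  have hK0 : 0 ≤ K := by
    have : 0 < 1 - l * B := by linarith
    positivity
  let M : ℕ → Ω → H := fun t ω => ∑ i ∈ Finset.Icc 1 t, ε i ω • X i ω
  let b : ℕ → Ω → ℝ := fun t ω => ‖Qinv t ω (X t ω)‖
  let D : ℕ → Ω → ℝ := fun t ω => ∑ i ∈ Finset.Icc 1 t, σ i ω ^ 2 * b i ω ^ 2
  let w : ℕ → Ω → ℝ := fun t ω => cosh (l * ‖Qinv t ω (M t ω)‖) * exp (-(K * D t ω))
  have hXm : ∀ s t, 1 ≤ t → t ≤ s + 1 → StronglyMeasurable[ℱ s] (X t) := fun s t h1 h2 =>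
    (hX t h1).mono (ℱ.mono (by omega))
  have hMm : ∀ t, StronglyMeasurable[ℱ t] (M t) := by
    intro t
    refine Finset.stronglyMeasurable_fun_sum _ fun i hi => ?_
    obtain ⟨h1, h2⟩ := Finset.mem_Icc.1 hi
    exact ((hεmeas i h1).mono (ℱ.mono h2)).smul (hXm t i h1 (by omega))
  have hbm : ∀ s t, 1 ≤ t → t ≤ s + 1 → Measurable[ℱ s] (b t) := fun s t h1 h2 =>
    meas_norm X ρ hρ Q Qinv hQpos hQsq hQinv (ℱ s) t (fun i hi hi' => hXm s i hi (by omega)) _ (hXm s t h1 h2)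
  have hσm : ∀ s t, 1 ≤ t → t ≤ s + 1 → t ≤ n → Measurable[ℱ s] (σ t) := fun s t h1 h2 h3 =>
    ((hσmeas t h1 h3).mono (ℱ.mono (by omega))).measurable
  have hDm : ∀ s t, t ≤ s + 1 → t ≤ n → Measurable[ℱ s] (D t) := by
    intro s t h1 h2
    refine Finset.measurable_fun_sum _ fun i hi => ?_
    obtain ⟨h3, h4⟩ := Finset.mem_Icc.1 hi
    exact ((hσm s i h3 (by omega) (by omega)).pow_const 2).mul ((hbm s i h3 (by omega)).pow_const 2)
  have hwm : ∀ t ≤ n, Measurable[ℱ t] (w t) := by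
    intro t ht
    have h1 : Measurable[ℱ t] (fun ω => ‖Qinv t ω (M t ω)‖) :=
      meas_norm X ρ hρ Q Qinv hQpos hQsq hQinv (ℱ t) t (fun i hi hi' => hXm t i hi (by omega)) _ (hMm t)
    have h2 := hDm t t (by omega) ht
    exact (Real.continuous_cosh.measurable.comp (h1.const_mul l)).mul (Real.measurable_exp.comp (h2.const_mul K).neg)
  have hstep : ∀ t, t + 1 ≤ n → ∀ A, MeasurableSet[ℱ t] A →
      ∫⁻ ω in A, ENNReal.ofReal (w (t + 1) ω) ∂μ ≤ ∫⁻ ω in A, ENNReal.ofReal (w t ω) ∂μ := by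
    intro t ht A hA
    have hnm : ∀ ω, (∀ y, ‖Qinv (t + 1) ω y‖ ≤ ‖Qinv t ω y‖) ∧ ‖Qinv (t + 1) ω (X (t + 1) ω)‖ ≤ 1 := by
      intro ω
      refine norm_mono (hQpos t ω) (hQinv t ω) (hQpos (t + 1) ω) (hQinv (t + 1) ω) _ ?_
      rw [hQsq, hQsq, Finset.sum_Icc_succ_top (by omega), add_assoc]
    let v : Ω → ℝ := fun ω => A.indicator (fun _ => (1 : ℝ)) ω * exp (-(K * D (t + 1) ω))
    let al : Ω → ℝ := fun ω => ‖Qinv (t + 1) ω (M t ω)‖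
    let ip : Ω → ℝ := fun ω => ⟪Qinv (t + 1) ω (M t ω), Qinv (t + 1) ω (X (t + 1) ω)⟫
    let k : Ω → ℝ := fun ω => l ^ 2 * ip ω * (sinh (l * al ω) / (l * al ω))
    have hvm : Measurable[ℱ t] v :=
      (measurable_const.indicator hA).mul (Real.measurable_exp.comp ((hDm t (t + 1) le_rfl ht).const_mul K).neg)
    have halm : Measurable[ℱ t] al :=
      meas_norm X ρ hρ Q Qinv hQpos hQsq hQinv (ℱ t) (t + 1) (fun i hi hi' => hXm t i hi hi') _ (hMm t)
    have hipm : Measurable[ℱ t] ip :=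
      meas_inner X ρ hρ Q Qinv hQpos hQsq hQinv (ℱ t) (t + 1) (fun i hi hi' => hXm t i hi hi') _ _ (hMm t)
        (hXm t (t + 1) (by omega) le_rfl)
    have hkm : Measurable[ℱ t] k :=
      (hipm.const_mul _).mul ((Real.continuous_sinh.measurable.comp (halm.const_mul l)).div (halm.const_mul l))
    have hcm : Measurable[ℱ t] (fun ω => v ω * cosh (l * al ω)) :=
      hvm.mul (Real.continuous_cosh.measurable.comp (halm.const_mul l))
    have hv0 : ∀ ω, 0 ≤ v ω := fun ω =>
      mul_nonneg (Set.indicator_nonneg (fun _ _ => zero_le_one) _) (exp_pos _).le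
    have hle : ∀ ω y, cosh (l * ‖Qinv (t + 1) ω (M t ω) + y • Qinv (t + 1) ω (X (t + 1) ω)‖) ≤
        cosh (l * al ω) * (exp (l * b (t + 1) ω * |y|) - l * b (t + 1) ω * |y|) + k ω * y := fun ω y =>
      cosh_step _ _ hl.le y
    have key := @cond_step Ω Ω m0 (ℱ t) μ _ id (measurable_id'' (ℱ.le t)) (ε (t + 1))
      ((hεmeas (t + 1) (by omega)).mono (ℱ.le _)).measurable (hmom (t + 1)) (hεint (t + 1) (by omega))
      (by rw [MeasurableSpace.comap_id]; exact hε0 (t + 1) (by omega)) B l hB hl.le hlB (σ (t + 1))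
      (hσm t (t + 1) (by omega) le_rfl ht)
      (by rw [MeasurableSpace.comap_id]; exact hbern (t + 1) (by omega) ht)
      (fun ω => v ω * cosh (l * al ω)) (b (t + 1)) (fun ω => v ω * k ω) hcm (hbm t (t + 1) (by omega) le_rfl)
      (hvm.mul hkm) (fun ω => mul_nonneg (hv0 ω) (cosh_pos _).le) (fun ω => norm_nonneg _) (fun ω => (hnm ω).2)
      (fun ω y => by
        have h := (cosh_pos _).le.trans (hle ω y)
        have := mul_nonneg (hv0 ω) h
        refine this.trans (le_of_eq ?_)
        ring)
    have hA' := ℱ.le t _ hA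
    rw [← lintegral_indicator hA', ← lintegral_indicator hA']
    refine le_trans (lintegral_mono fun ω => ?_) (key.trans (lintegral_mono fun ω => ?_))
    · by_cases hω : ω ∈ A
      · simp only [Set.indicator_of_mem hω]
        refine ENNReal.ofReal_le_ofReal ?_
        have hM1 : Qinv (t + 1) ω (M (t + 1) ω) =
            Qinv (t + 1) ω (M t ω) + ε (t + 1) ω • Qinv (t + 1) ω (X (t + 1) ω) := by
          simp only [M]
          rw [Finset.sum_Icc_succ_top (by omega), map_add, map_smul]
        have hvA : v ω = exp (-(K * D (t + 1) ω)) := by simp [v, hω]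
        have h := mul_le_mul_of_nonneg_left (hle ω (ε (t + 1) ω)) (hv0 ω)
        simp only [w, hM1, id]
        rw [mul_comm, ← hvA]
        refine h.trans (le_of_eq ?_)
        ring
      · simp [Set.indicator_of_notMem hω]
    · by_cases hω : ω ∈ A
      · simp only [Set.indicator_of_mem hω, id]
        refine ENNReal.ofReal_le_ofReal ?_
        have hvA : v ω = exp (-(K * D (t + 1) ω)) := by simp [v, hω]
        have hD1 : D (t + 1) ω = D t ω + σ (t + 1) ω ^ 2 * b (t + 1) ω ^ 2 := by
          simp only [D]
          rw [Finset.sum_Icc_succ_top (by omega)]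
        have hch : cosh (l * al ω) ≤ cosh (l * ‖Qinv t ω (M t ω)‖) := by
          rw [Real.cosh_le_cosh, abs_of_nonneg (by positivity), abs_of_nonneg (by positivity)]
          exact mul_le_mul_of_nonneg_left ((hnm ω).1 _) hl.le
        calc v ω * cosh (l * al ω) * exp (K * (σ (t + 1) ω ^ 2 * b (t + 1) ω ^ 2))
            = cosh (l * al ω) * (exp (-(K * D (t + 1) ω)) * exp (K * (σ (t + 1) ω ^ 2 * b (t + 1) ω ^ 2))) := by
              rw [hvA]; ring
          _ = cosh (l * al ω) * exp (-(K * D t ω)) := by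
              rw [← Real.exp_add, hD1]; ring_nf
          _ ≤ w t ω := by
              simp only [w]; gcongr
      · have hvA : v ω = 0 := by simp [v, hω]
        simp [hvA]
  have hmax := maximal (μ := μ) ℱ (fun t ω => ENNReal.ofReal (w t ω)) n
    (fun t ht => (hwm t ht).ennreal_ofReal)
    (by simp [w, M, D]) hstep (ENNReal.ofReal (1 / δ))
  have hsub : μ {ω | ∃ t ≤ n, r ≤ ‖Qinv t ω (∑ i ∈ Finset.Icc 1 t, ε i ω • X i ω)‖} ≤
      μ {ω | ∃ t ≤ n, ENNReal.ofReal (1 / δ) ≤ ENNReal.ofReal (w t ω)} := by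
    refine measure_mono_ae ?_
    filter_upwards [hCn] with ω hω
    rintro ⟨t, ht, h⟩
    refine ⟨t, ht, ENNReal.ofReal_le_ofReal ?_⟩
    have hDC : D t ω ≤ C ^ 2 := by
      refine le_trans ?_ hω
      exact Finset.sum_le_sum_of_subset_of_nonneg (Finset.Icc_subset_Icc_right ht) (fun i _ _ => by positivity)
    have h1 : exp (l * r) / 2 ≤ cosh (l * ‖Qinv t ω (M t ω)‖) := by
      rw [Real.cosh_eq]
      have : exp (l * r) ≤ exp (l * ‖Qinv t ω (M t ω)‖) := Real.exp_le_exp.2 (mul_le_mul_of_nonneg_left h hl.le)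
      have := (exp_pos (-(l * ‖Qinv t ω (M t ω)‖))).le
      linarith
    have h2 : exp (-(K * C ^ 2)) ≤ exp (-(K * D t ω)) := by gcongr
    calc 1 / δ = exp (l * r) / 2 * exp (-(K * C ^ 2)) := by
          rw [hr, Real.exp_add, Real.exp_log (by positivity), Real.exp_neg]
          have := (exp_pos (K * C ^ 2)).ne'
          field_simp
      _ ≤ w t ω := by
          simp only [w]; gcongr
  refine hsub.trans ?_
  have h5 : ENNReal.ofReal δ * ENNReal.ofReal (1 / δ) = 1 := by
    rw [← ENNReal.ofReal_mul hδ.le, mul_one_div_cancel hδ.ne', ENNReal.ofReal_one]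
  calc _ = ENNReal.ofReal δ * (ENNReal.ofReal (1 / δ) * μ {ω | ∃ t ≤ n, ENNReal.ofReal (1 / δ) ≤ ENNReal.ofReal (w t ω)}) := by
        rw [← mul_assoc, h5, one_mul]
    _ ≤ ENNReal.ofReal δ * 1 := by gcongr
    _ = _ := mul_one _

theorem stmt_3
    {H : Type*} [NormedAddCommGroup H] [InnerProductSpace ℝ H] [CompleteSpace H]
    [SecondCountableTopology H]
    {Ω : Type*} {m0 : MeasurableSpace Ω} {μ : Measure Ω} [IsProbabilityMeasure μ]
    (ℱ : Filtration ℕ m0)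
    (X : ℕ → Ω → H) (ε : ℕ → Ω → ℝ)
    (hX : ∀ t, 1 ≤ t → StronglyMeasurable[ℱ (t - 1)] (X t))
    (hεmeas : ∀ t, 1 ≤ t → StronglyMeasurable[ℱ t] (ε t))
    (hεint : ∀ t, 1 ≤ t → Integrable (ε t) μ)
    (hε0 : ∀ t, 1 ≤ t → μ[ε t | ℱ (t - 1)] =ᵐ[μ] 0)
    (ρ : ℝ) (hρ : 0 < ρ)
    (Q Qinv : ℕ → Ω → H →L[ℝ] H)
    (hQpos : ∀ t ω, (Q t ω).IsPositive)
    (hQsq : ∀ t ω, Q t ω ∘L Q t ω =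
      ρ • (1 : H →L[ℝ] H) + ∑ i ∈ Finset.Icc 1 t, outerProd (X i ω))
    (hQinv : ∀ t ω, Qinv t ω ∘L Q t ω = 1 ∧ Q t ω ∘L Qinv t ω = 1)
    (n : ℕ) (hn : 1 ≤ n)
    (B : ℝ) (hB : 0 < B) (σ : ℕ → Ω → ℝ)
    (hσmeas : ∀ t, 1 ≤ t → t ≤ n → StronglyMeasurable[ℱ (t - 1)] (σ t))
    (hmom : ∀ t m, Integrable (fun ω => |ε t ω| ^ m) μ)
    (hbern : ∀ t, 1 ≤ t → t ≤ n → ∀ m : ℕ, 2 ≤ m →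
      μ[fun ω => |ε t ω| ^ m | ℱ (t - 1)] ≤ᵐ[μ]
        fun ω => (1 / 2) * (Nat.factorial m : ℝ) * B ^ (m - 2) * σ t ω ^ 2)
    (C : ℝ) (hC : 0 ≤ C)
    (hCn : ∀ᵐ ω ∂μ, ∑ i ∈ Finset.Icc 1 n, σ i ω ^ 2 * ‖Qinv i ω (X i ω)‖ ^ 2 ≤ C ^ 2)
    (δ : ℝ) (hδ : δ ∈ Set.Ioo (0 : ℝ) 1) :
    ENNReal.ofReal (1 - δ) ≤
      μ {ω | ∀ t, 1 ≤ t → t ≤ n →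
        ‖Qinv t ω (∑ i ∈ Finset.Icc 1 t, ε i ω • X i ω)‖ ≤
          B * Real.log (2 / δ) + C * Real.sqrt (2 * Real.log (2 / δ))} := by
  have hδ0 := hδ.1
  set L := Real.log (2 / δ) with hL
  have hL0 : 0 < L := Real.log_pos (by rw [lt_div_iff₀ hδ0]; linarith [hδ.2])
  have hu : ∀ u : ℝ, 0 < u → μ {ω | ∃ t ≤ n, B * L + (L / u + u * C ^ 2 / 2) ≤
      ‖Qinv t ω (∑ i ∈ Finset.Icc 1 t, ε i ω • X i ω)‖} ≤ ENNReal.ofReal δ := by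
    intro u hu
    have hlB : 1 - u / (1 + B * u) * B = 1 / (1 + B * u) := by field_simp; ring
    have hpos : 0 < 1 / (1 + B * u) := by positivity
    refine tail_bound ℱ X ε hX hεmeas hεint hε0 ρ hρ Q Qinv hQpos hQsq hQinv n B hB σ hσmeas hmom hbern C hCn
      (u / (1 + B * u)) (by positivity) (by linarith) _ δ hδ0 ?_
    rw [hlB, ← hL]
    field_simp
    ring
  have hbad : μ {ω | ∀ t, 1 ≤ t → t ≤ n →
        ‖Qinv t ω (∑ i ∈ Finset.Icc 1 t, ε i ω • X i ω)‖ ≤ B * L + C * Real.sqrt (2 * L)}ᶜ ≤ ENNReal.ofReal δ := by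
    rcases hC.eq_or_lt with hC0 | hC0
    · subst hC0
      have hsub : {ω | ∀ t, 1 ≤ t → t ≤ n → ‖Qinv t ω (∑ i ∈ Finset.Icc 1 t, ε i ω • X i ω)‖ ≤
          B * L + 0 * Real.sqrt (2 * L)}ᶜ ⊆ ⋃ k : ℕ, {ω | ∃ t ≤ n, B * L + (L / ((k : ℝ) + 1) + ((k : ℝ) + 1) * 0 ^ 2 / 2) ≤
            ‖Qinv t ω (∑ i ∈ Finset.Icc 1 t, ε i ω • X i ω)‖} := by
        intro ω hω
        simp only [Set.mem_compl_iff, Set.mem_setOf_eq, not_forall, not_le] at hω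
        obtain ⟨t, _, ht, h⟩ := hω
        rw [zero_mul, add_zero] at h
        obtain ⟨k, hk⟩ := exists_nat_gt (L / (‖Qinv t ω (∑ i ∈ Finset.Icc 1 t, ε i ω • X i ω)‖ - B * L))
        refine Set.mem_iUnion.2 ⟨k, t, ht, ?_⟩
        have h1 : 0 < ‖Qinv t ω (∑ i ∈ Finset.Icc 1 t, ε i ω • X i ω)‖ - B * L := by linarith
        rw [div_lt_iff₀ h1] at hk
        have h2 : L / ((k : ℝ) + 1) ≤ ‖Qinv t ω (∑ i ∈ Finset.Icc 1 t, ε i ω • X i ω)‖ - B * L := by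
          rw [div_le_iff₀ (by positivity)]
          nlinarith
        have h3 : ((k : ℝ) + 1) * 0 ^ 2 / 2 = 0 := by ring
        rw [h3]
        linarith
      refine (measure_mono hsub).trans ?_
      rw [Monotone.measure_iUnion]
      · exact iSup_le fun k => hu _ (by positivity)
      · intro j k hjk ω
        rintro ⟨t, ht, h⟩
        refine ⟨t, ht, le_trans ?_ h⟩
        have : (j : ℝ) ≤ k := by exact_mod_cast hjk
        have h2 : L / ((k : ℝ) + 1) ≤ L / ((j : ℝ) + 1) := by gcongr
        norm_num
        exact h2
    · have hs : 0 < √(2 * L) := Real.sqrt_pos.2 (by positivity)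
      have hs2 : √(2 * L) ^ 2 = 2 * L := Real.sq_sqrt (by positivity)
      refine le_trans (measure_mono ?_) (hu (√(2 * L) / C) (by positivity))
      intro ω hω
      simp only [Set.mem_compl_iff, Set.mem_setOf_eq, not_forall, not_le] at hω
      obtain ⟨t, _, ht, h⟩ := hω
      refine ⟨t, ht, le_trans (le_of_eq ?_) h.le⟩
      have : L = √(2 * L) ^ 2 / 2 := by rw [hs2]; ring
      have e1 : L / (√(2 * L) / C) = C * √(2 * L) / 2 := by
        rw [div_eq_iff (by positivity)]
        have e3 : C * √(2 * L) / 2 * (√(2 * L) / C) = √(2 * L) ^ 2 / 2 := by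
          field_simp
        rw [e3]
        exact this
      have e2 : √(2 * L) / C * C ^ 2 / 2 = C * √(2 * L) / 2 := by field_simp
      rw [e1, e2]; ring
  set S := {ω | ∀ t, 1 ≤ t → t ≤ n →
        ‖Qinv t ω (∑ i ∈ Finset.Icc 1 t, ε i ω • X i ω)‖ ≤ B * L + C * Real.sqrt (2 * L)}
  rw [ENNReal.ofReal_sub _ hδ0.le, ENNReal.ofReal_one, tsub_le_iff_right]
  calc (1 : ENNReal) = μ Set.univ := measure_univ.symm
    _ = μ (S ∪ Sᶜ) := by rw [Set.union_compl_self]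
    _ ≤ μ S + μ Sᶜ := measure_union_le _ _
    _ ≤ _ := by gcongr
end
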